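/- arXiv:2007.11054 — 5 statements merged into one kernel-verified Lean document; each statement's English description precedes it below -/
import Mathlib

section
/- For all m, m' ∈ ℕ^n one has the Minkowski sum identity S_A(m + m') = S_A(m) + S_A(m'): every element of S_A(m + m') can be written as x + y with x ∈ S_A(m) and y ∈ S_A(m'), and conversely every such sum x + y lies in S_A(m + m'). (This is the type-A case of the paper's Lemma that S_w(λ) + S_w(μ) = S_w(λ + μ).) -/
open Finset
open scoped Pointwise

/-- The lattice-point set `S_A(m)` of the polytope `P_w(λ)` in type `A_n`, where
`w = s_1 ⋯ s_{n-1} s_n s_{n-1} ⋯ s_1` and `λ = m_1 ω_1 + ⋯ + m_n ω_n`.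
A point is a pair `(a, b)` of 1-based tuples of nonnegative integers, with coordinates
`a_1, …, a_n` and `b_2, …, b_n` (all other coordinates vanish), subject to the
Dyck-path inequalities (A1)–(A3) and the degree-path inequalities (A4). -/
def SA (n : ℕ) (m : ℕ → ℕ) : Set ((ℕ → ℕ) × (ℕ → ℕ)) :=
  {x | (∀ l, (l = 0 ∨ n < l) → x.1 l = 0) ∧
    (∀ l, (l ≤ 1 ∨ n < l) → x.2 l = 0) ∧
    (∀ j, 1 ≤ j → j < n →
      ∑ l ∈ Icc 1 j, x.1 l ≤ ∑ l ∈ Icc 1 j, m l) ∧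
    (∀ i, 2 ≤ i → i ≤ n →
      ∑ l ∈ Icc i n, x.2 l ≤ ∑ l ∈ Icc i n, m l) ∧
    (∀ t, 1 ≤ t → t < n →
      (∑ l ∈ Icc 1 t, x.1 l) + x.1 n + ∑ l ∈ Icc (t + 1) n, x.2 l ≤ ∑ l ∈ Icc 1 n, m l) ∧
    (∀ i r, 2 ≤ i → i < n → i ≤ r → r < n →
      (∑ l ∈ Icc 1 r, x.1 l) + x.1 n + ∑ l ∈ Icc i n, x.2 l ≤
        (∑ l ∈ Icc 1 n, m l) + ∑ l ∈ Icc i r, m l)}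

/-- Integer prefix sums `f 1 + ⋯ + f j`. -/
def pre (f : ℕ → ℕ) (j : ℕ) : ℤ := ∑ l ∈ Icc 1 j, (f l : ℤ)

theorem pre_succ (f : ℕ → ℕ) (j : ℕ) : pre f (j + 1) = pre f j + f (j + 1) := by
  unfold pre
  rw [Finset.sum_Icc_succ_top (by omega)]

theorem pre_zero (f : ℕ → ℕ) : pre f 0 = 0 := by simp [pre]

theorem pre_add (f g : ℕ → ℕ) (j : ℕ) : pre (f + g) j = pre f j + pre g j := by
  simp [pre, Finset.sum_add_distrib]

theorem pre_mono (f : ℕ → ℕ) {i j : ℕ} (h : i ≤ j) : pre f i ≤ pre f j := by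
  induction j, h using Nat.le_induction with
  | base => exact le_rfl
  | succ j _ ih => rw [pre_succ]; omega

theorem pre_const (f : ℕ → ℕ) {i j : ℕ} (h : i ≤ j) (h0 : ∀ l, i < l → l ≤ j → f l = 0) :
    pre f j = pre f i := by
  induction j, h using Nat.le_induction with
  | base => rfl
  | succ j hj ih =>
    rw [pre_succ, ih (fun l h1 h2 => h0 l h1 (by omega)), h0 (j + 1) (by omega) le_rfl]; simp

theorem pre_single (k j : ℕ) (hk : 1 ≤ k) :
    pre (Pi.single k 1) j = if k ≤ j then 1 else 0 := by
  induction j with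
  | zero => rw [pre_zero, if_neg (by omega)]
  | succ j ih =>
    rw [pre_succ, ih]
    by_cases h : j + 1 = k
    · subst h; simp
    · rw [Pi.single_eq_of_ne h]; split_ifs <;> first | omega | rfl

theorem sum_Icc_one (f : ℕ → ℕ) (j : ℕ) : ((∑ l ∈ Icc 1 j, f l : ℕ) : ℤ) = pre f j := by
  simp [pre]

theorem sum_Icc_pre (f : ℕ → ℕ) (i j : ℕ) (h : i ≤ j) :
    ((∑ l ∈ Icc (i + 1) j, f l : ℕ) : ℤ) = pre f j - pre f i := by
  induction j, h using Nat.le_induction with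
  | base => simp
  | succ j hj ih =>
    rw [Finset.sum_Icc_succ_top (by omega), pre_succ]; push_cast at ih ⊢; rw [ih]; ring

/-- Reformulation of membership in `SA` through prefix sums. -/
theorem mem_SA (n : ℕ) (hn : 2 ≤ n) (m : ℕ → ℕ) (x : (ℕ → ℕ) × (ℕ → ℕ)) :
    x ∈ SA n m ↔ (∀ l, (l = 0 ∨ n < l) → x.1 l = 0) ∧ (∀ l, (l ≤ 1 ∨ n < l) → x.2 l = 0) ∧
      (∀ r, 1 ≤ r → r < n → pre x.1 r ≤ pre m r) ∧
      (∀ s, 1 ≤ s → s < n → pre x.2 n - pre x.2 s ≤ pre m n - pre m s) ∧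
      (∀ s r, 1 ≤ s → s ≤ r → r < n →
        pre x.1 r + x.1 n + (pre x.2 n - pre x.2 s) ≤ pre m n + (pre m r - pre m s)) := by
  constructor
  · rintro ⟨h1, h2, h3, h4, h5, h6⟩
    refine ⟨h1, h2, fun r hr hr' => ?_, fun s hs hs' => ?_, fun s r hs hsr hr => ?_⟩
    · have := h3 r hr hr'; zify at this; simpa [pre] using this
    · have := h4 (s + 1) (by omega) (by omega)
      have e1 := sum_Icc_pre x.2 s n (by omega)
      have e2 := sum_Icc_pre m s n (by omega)
      omega
    · have e1 := sum_Icc_pre x.2 s n (by omega)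
      have e2 := sum_Icc_one x.1 r
      have e3 := sum_Icc_one m n
      rcases hsr.eq_or_lt with rfl | hlt
      · have := h5 s hs hr
        omega
      · have := h6 (s + 1) r (by omega) (by omega) (by omega) hr
        have e4 := sum_Icc_pre m s r (by omega)
        omega
  · rintro ⟨h1, h2, h3, h4, h5⟩
    refine ⟨h1, h2, fun r hr hr' => ?_, fun i hi hi' => ?_, fun t ht ht' => ?_,
      fun i r hi hi' hir hr => ?_⟩
    · have := h3 r hr hr'
      have e1 := sum_Icc_one x.1 r
      have e2 := sum_Icc_one m r
      omega
    · obtain ⟨s, rfl⟩ : ∃ s, i = s + 1 := ⟨i - 1, by omega⟩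
      have := h4 s (by omega) (by omega)
      have e1 := sum_Icc_pre x.2 s n (by omega)
      have e2 := sum_Icc_pre m s n (by omega)
      omega
    · have := h5 t t ht le_rfl ht'
      have e1 := sum_Icc_pre x.2 t n (by omega)
      have e2 := sum_Icc_one x.1 t
      have e3 := sum_Icc_one m n
      omega
    · obtain ⟨s, rfl⟩ : ∃ s, i = s + 1 := ⟨i - 1, by omega⟩
      have := h5 s r (by omega) (by omega) hr
      have e1 := sum_Icc_pre x.2 s n (by omega)
      have e2 := sum_Icc_one x.1 r
      have e3 := sum_Icc_one m n
      have e4 := sum_Icc_pre m s r (by omega)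
      omega

theorem SA_add_sub (n : ℕ) (hn : 2 ≤ n) (m m' : ℕ → ℕ) :
    SA n m + SA n m' ⊆ SA n (m + m') := by
  rintro _ ⟨x, hx, y, hy, rfl⟩
  rw [mem_SA n hn] at hx hy
  simp only
  rw [mem_SA n hn]
  obtain ⟨a1, a2, a3, a4, a5⟩ := hx
  obtain ⟨b1, b2, b3, b4, b5⟩ := hy
  refine ⟨fun l hl => ?_, fun l hl => ?_, fun r hr hr' => ?_, fun s hs hs' => ?_,
    fun s r hs hsr hr => ?_⟩
  · simp [a1 l hl, b1 l hl]
  · simp [a2 l hl, b2 l hl]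
  · have := a3 r hr hr'
    have := b3 r hr hr'
    simp only [Prod.fst_add, pre_add]; omega
  · have := a4 s hs hs'
    have := b4 s hs hs'
    simp only [Prod.snd_add, pre_add]; omega
  · have := a5 s r hs hsr hr
    have := b5 s r hs hsr hr
    simp only [Prod.snd_add, Prod.fst_add, pre_add, Pi.add_apply]; push_cast; omega

/-- First index `j ≥ k` with `a j ≠ 0`, capped at `n`. -/
theorem exists_first (a : ℕ → ℕ) (k n : ℕ) (hk : k ≤ n) :
    ∃ j, k ≤ j ∧ j ≤ n ∧ (∀ l, k ≤ l → l < j → a l = 0) ∧ (j < n → 1 ≤ a j) := by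
  induction n, hk using Nat.le_induction with
  | base => exact ⟨k, le_rfl, le_rfl, fun l h1 h2 => by omega, fun h => by omega⟩
  | succ n hn ih =>
    obtain ⟨j, h1, h2, h3, h4⟩ := ih
    by_cases h : j < n ∨ 1 ≤ a j
    · exact ⟨j, h1, by omega, h3, fun _ => by rcases h with h | h; exacts [h4 h, h]⟩
    · refine ⟨n + 1, by omega, le_rfl, fun l hl hl' => ?_, fun h => by omega⟩
      by_cases hlj : l < j
      · exact h3 l hl hlj
      · have : l = j := by omega
        subst this; omega

/-- Last index `i ≤ k` with `b i ≠ 0`, at least `1`. -/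
theorem exists_last (b : ℕ → ℕ) (k : ℕ) (hk : 1 ≤ k) :
    ∃ i, 1 ≤ i ∧ i ≤ k ∧ (∀ l, i < l → l ≤ k → b l = 0) ∧ (1 < i → 1 ≤ b i) := by
  induction k, hk using Nat.le_induction with
  | base => exact ⟨1, le_rfl, le_rfl, fun l h1 h2 => by omega, fun h => by omega⟩
  | succ k hk ih =>
    obtain ⟨i, h1, h2, h3, h4⟩ := ih
    by_cases h : 1 ≤ b (k + 1)
    · exact ⟨k + 1, by omega, le_rfl, fun l _ _ => by omega, fun _ => h⟩
    · refine ⟨i, h1, by omega, fun l hl hl' => ?_, h4⟩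
      by_cases hlk : l = k + 1
      · subst hlk; omega
      · exact h3 l hl (by omega)

theorem SA_step (n : ℕ) (hn : 2 ≤ n) (m : ℕ → ℕ) (k : ℕ) (hk : 1 ≤ k) (hkn : k ≤ n) :
    SA n (m + Pi.single k 1) ⊆ SA n m + SA n (Pi.single k 1) := by
  intro x hx
  rw [mem_SA n hn] at hx
  obtain ⟨h1, h2, hF, hE, hC⟩ := hx
  simp only [pre_add, pre_single k _ hk] at hF hE hC
  obtain ⟨a, b⟩ := x
  simp only at h1 h2 hF hE hC
  -- it suffices to find the piece split off
  suffices H : ∃ y : (ℕ → ℕ) × (ℕ → ℕ), y ∈ SA n (Pi.single k 1) ∧ ∃ z : (ℕ → ℕ) × (ℕ → ℕ),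
      (a, b) = z + y ∧ z ∈ SA n m by
    obtain ⟨y, hy, z, hz, hz'⟩ := H
    exact ⟨z, hz', y, hy, hz.symm⟩
  obtain ⟨k', rfl⟩ : ∃ k', k = k' + 1 := ⟨k - 1, by omega⟩
  have ak := pre_succ a k'
  have bk := pre_succ b k'
  have mk := pre_succ m k'
  have hFk : pre a k' ≤ pre m k' := by
    rcases Nat.eq_zero_or_pos k' with h | h
    · subst h; simp [pre_zero]
    · have := hF k' h (by omega)
      rw [if_neg (by omega)] at this; omega
  have hEk : pre b n - pre b (k' + 1) ≤ pre m n - pre m (k' + 1) := by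
    rcases hkn.eq_or_lt with h | h
    · rw [h]; omega
    · have := hE (k' + 1) hk h
      rw [if_pos hkn, if_pos le_rfl] at this; omega
  simp only [if_pos hkn] at hC
  simp only [if_pos hkn] at hE
  have am : ∀ i j, i ≤ j → pre a i ≤ pre a j := fun i j h => pre_mono a h
  have bm : ∀ i j, i ≤ j → pre b i ≤ pre b j := fun i j h => pre_mono b h
  have mm : ∀ i j, i ≤ j → pre m i ≤ pre m j := fun i j h => pre_mono m h
  by_cases hc : 1 ≤ a n ∧ ((k' + 1 < n ∧ a (k' + 1) = 0 ∧
      pre a (k' + 1) + a n + (pre b n - pre b (k' + 1)) = pre m n + 1) ∨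
      (1 ≤ k' ∧ b (k' + 1) = 0 ∧ pre a k' + a n + (pre b n - pre b k') = pre m n + 1))
  · obtain ⟨hc1, hc⟩ := hc
    have hle : ∀ l, (Pi.single n 1 : ℕ → ℕ) l ≤ a l := by
      intro l
      by_cases h : l = n
      · subst h; simpa using hc1
      · simp [Pi.single_eq_of_ne h]
    obtain ⟨a', rfl⟩ : ∃ a', a = a' + Pi.single n 1 :=
      ⟨a - Pi.single n 1, by funext l; have := hle l; simp only [Pi.add_apply, Pi.sub_apply]; omega⟩
    refine ⟨(Pi.single n 1, 0), ?_, (a', b), by simp, ?_⟩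
    · rw [mem_SA n hn]
      have p0 : ∀ r, pre 0 r = 0 := fun r => by simp [pre]
      simp only [pre_single _ _ hk, pre_single n _ (by omega : 1 ≤ n), p0, Pi.single_eq_same]
      refine ⟨fun l hl => Pi.single_eq_of_ne (by omega) _, fun l hl => rfl, fun r hr hr' => ?_,
        fun s hs hs' => ?_, fun s r hs hsr hr => ?_⟩ <;> split_ifs <;> omega
    · rw [mem_SA n hn]
      simp only [pre_add, pre_single n _ (by omega : 1 ≤ n), Pi.add_apply, Pi.single_eq_same]
        at hF hE hC hc ak hFk
      have an0 : a' 0 = 0 := by have := h1 0 (by simp); simp at this; omega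
      refine ⟨fun l hl => ?_, h2, fun r hr hr' => ?_, fun s hs hs' => ?_,
        fun s r hs hsr hr => ?_⟩
      · have := h1 l hl
        rw [Pi.add_apply] at this
        exact (Nat.add_eq_zero_iff.1 this).1
      · by_cases hkr : k' + 1 ≤ r
        · have := hC (k' + 1) r hk hkr hr'
          grind
        · have := hF r hr hr'
          grind
      · by_cases hks : k' + 1 ≤ s
        · have := hE s hs hs'
          grind
        · have := hC s k' hs (by omega) (by omega)
          grind
      · by_cases h : s < k' + 1 ∧ k' + 1 ≤ r
        · have := hC s k' hs (by omega) (by omega)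
          have := hC (k' + 1) r hk (by omega) hr
          grind
        · have := hC s r hs hsr hr
          grind
  · obtain ⟨j, hj1, hj2, hj3, hj4⟩ := exists_first a (k' + 1) n hkn
    obtain ⟨i, hi1, hi2, hi3, hi4⟩ := exists_last b (k' + 1) hk
    obtain ⟨u, hu0, hu1, hu2, hu3⟩ : ∃ u : ℕ → ℕ, (∀ l, l < 1 ∨ n ≤ l → u l = 0) ∧
        (∀ l, u l ≤ a l) ∧ (∀ r, r < n → pre u r = if j ≤ r then 1 else 0) ∧ u n = 0 := by
      by_cases h : j < n
      · refine ⟨Pi.single j 1, fun l hl => Pi.single_eq_of_ne (by omega) _, fun l => ?_,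
          fun r _ => pre_single j r (by omega), Pi.single_eq_of_ne (by omega) _⟩
        by_cases hl : l = j
        · subst hl; simpa using hj4 h
        · simp [Pi.single_eq_of_ne hl]
      · exact ⟨0, fun _ _ => rfl, fun _ => Nat.zero_le _,
          fun r hr => by rw [if_neg (by omega)]; simp [pre], rfl⟩
    obtain ⟨v, hv0, hv1, hv2⟩ : ∃ v : ℕ → ℕ, (∀ l, l ≤ 1 ∨ n < l → v l = 0) ∧
        (∀ l, v l ≤ b l) ∧
        (∀ s, 1 ≤ s → s < n → pre v n - pre v s = if s < i then 1 else 0) := by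
      by_cases h : 1 < i
      · refine ⟨Pi.single i 1, fun l hl => Pi.single_eq_of_ne (by omega) _, fun l => ?_,
          fun s _ _ => ?_⟩
        · by_cases hl : l = i
          · subst hl; simpa using hi4 h
          · simp [Pi.single_eq_of_ne hl]
        · rw [pre_single i _ hi1, pre_single i _ hi1]; split_ifs <;> omega
      · exact ⟨0, fun _ _ => rfl, fun _ => Nat.zero_le _,
          fun s hs _ => by rw [if_neg (by omega)]; simp [pre]⟩
    refine ⟨(u, v), ?_, (a - u, b - v), ?_, ?_⟩
    · rw [mem_SA n hn]
      simp only [pre_single _ _ hk, hu3]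
      refine ⟨fun l hl => hu0 l (by omega), hv0, fun r hr hr' => ?_,
        fun s hs hs' => ?_, fun s r hs hsr hr => ?_⟩
      · rw [hu2 r hr']; split_ifs <;> omega
      · rw [hv2 s hs hs']; split_ifs <;> omega
      · rw [hu2 r hr, hv2 s hs (by omega)]; split_ifs <;> omega
    · ext l
      · have := hu1 l; simp; omega
      · have := hv1 l; simp; omega
    · have hau : ∀ r, pre (a - u) r = pre a r - pre u r := by
        intro r
        have : a = (a - u) + u := by funext l; have := hu1 l; simp; omega
        conv_rhs => rw [this, pre_add]
        ring
      have hbv : ∀ r, pre (b - v) r = pre b r - pre v r := by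
        intro r
        have : b = (b - v) + v := by funext l; have := hv1 l; simp; omega
        conv_rhs => rw [this, pre_add]
        ring
      rw [mem_SA n hn]
      simp only [hau, hbv, Pi.sub_apply, hu3]
      have hF' : ∀ r, 1 ≤ r → r < n → pre a r - pre u r ≤ pre m r := by
        intro r hr hr'
        rw [hu2 r hr']
        have q := hF r hr hr'
        by_cases h : k' + 1 ≤ r ∧ r < j
        · have e := pre_const a (i := k') (j := r) (by omega)
            (fun l h1 h2 => hj3 l (by omega) (by omega))
          have := mm k' r (by omega)
          rw [if_neg (by omega)]; omega
        · split_ifs at q ⊢ <;> omega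
      have hE' : ∀ s, 1 ≤ s → s < n →
          pre b n - pre v n - (pre b s - pre v s) ≤ pre m n - pre m s := by
        intro s hs hs'
        have w := hv2 s hs hs'
        have q := hE s hs hs'
        by_cases h : i ≤ s ∧ s < k' + 1
        · have e := pre_const b (i := s) (j := k' + 1) (by omega)
            (fun l h1 h2 => hi3 l (by omega) (by omega))
          have := mm s (k' + 1) (by omega)
          rw [if_neg (by omega)] at w; omega
        · split_ifs at q w <;> omega
      refine ⟨fun l hl => by simp [h1 l hl], fun l hl => by simp [h2 l hl], hF', hE',
        fun s r hs hsr hr => ?_⟩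
      have f1 := hF' r (by omega) hr
      have f2 := hE' s hs (by omega)
      by_cases hc0 : a n = 0
      · omega
      have w := hv2 s hs (by omega)
      have w' := hu2 r hr
      have q := hC s r hs hsr hr
      have e1 : k' + 1 ≤ r → r < j → pre a r = pre a k' := fun _ _ =>
        pre_const a (by omega) (fun l h1 h2 => hj3 l (by omega) (by omega))
      have e2 : i ≤ s → s < k' + 1 → pre b (k' + 1) = pre b s := fun _ _ =>
        pre_const b (by omega) (fun l h1 h2 => hi3 l (by omega) (by omega))
      have t1 : k' + 1 < n → a (k' + 1) = 0 →
          pre a (k' + 1) + a n + (pre b n - pre b (k' + 1)) ≤ pre m n := by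
        intro g1 g2
        have := hC (k' + 1) (k' + 1) hk le_rfl g1
        by_contra g
        exact hc ⟨by omega, Or.inl ⟨g1, g2, by omega⟩⟩
      have t2 : 1 ≤ k' → b (k' + 1) = 0 →
          pre a k' + a n + (pre b n - pre b k') ≤ pre m n := by
        intro g1 g2
        have := hC k' k' g1 le_rfl (by omega)
        by_contra g
        exact hc ⟨by omega, Or.inr ⟨g1, g2, by omega⟩⟩
      have msr := mm s r hsr
      by_cases c1 : k' + 1 ≤ s
      · by_cases c2 : r < j
        · have z := hj3 (k' + 1) le_rfl (by omega)
          have := t1 (by omega) z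
          have := bm (k' + 1) s c1
          have := e1 (by omega) c2
          rw [if_neg (by omega)] at w w'
          omega
        · split_ifs at w w' q <;> omega
      · by_cases c2 : i ≤ s
        · have z := hi3 (k' + 1) (by omega) le_rfl
          have := t2 (by omega) z
          have := e2 c2 (by omega)
          rw [if_neg (by omega)] at w
          by_cases c3 : k' + 1 ≤ r
          · by_cases c4 : r < j
            · have := e1 c3 c4
              rw [if_neg (by omega)] at w'
              omega
            · have := mm s (k' + 1) (by omega)
              have := hC (k' + 1) r hk c3 hr
              rw [if_pos (by omega)] at w'
              rw [if_pos c3, if_pos le_rfl] at this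
              omega
          · have := am r k' (by omega)
            rw [if_neg (by omega)] at w'
            omega
        · rw [if_pos (by omega)] at w
          by_cases c3 : k' + 1 ≤ r ∧ r < j
          · have := hC s k' hs (by omega) (by omega)
            have := e1 c3.1 c3.2
            have := mm k' r (by omega)
            rw [if_neg (by omega)] at w'
            grind
          · split_ifs at w' q <;> omega

theorem SA_congr (n : ℕ) (hn : 2 ≤ n) (m m' : ℕ → ℕ) (h : ∀ l, 1 ≤ l → l ≤ n → m l = m' l) :
    SA n m = SA n m' := by
  have hp : ∀ r, r ≤ n → pre m r = pre m' r := by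
    intro r hr
    unfold pre
    refine Finset.sum_congr rfl fun l hl => ?_
    rw [Finset.mem_Icc] at hl
    rw [h l hl.1 (by omega)]
  ext x
  rw [mem_SA n hn, mem_SA n hn]
  have q := hp n le_rfl
  constructor
  · rintro ⟨h1, h2, h3, h4, h5⟩
    refine ⟨h1, h2, fun r hr hr' => ?_, fun s hs hs' => ?_, fun s r hs hsr hr => ?_⟩
    · rw [← hp r (by omega)]; exact h3 r hr hr'
    · rw [← hp s (by omega), ← q]; exact h4 s hs hs'
    · rw [← hp s (by omega), ← hp r (by omega), ← q]; exact h5 s r hs hsr hr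
  · rintro ⟨h1, h2, h3, h4, h5⟩
    refine ⟨h1, h2, fun r hr hr' => ?_, fun s hs hs' => ?_, fun s r hs hsr hr => ?_⟩
    · rw [hp r (by omega)]; exact h3 r hr hr'
    · rw [hp s (by omega), q]; exact h4 s hs hs'
    · rw [hp s (by omega), hp r (by omega), q]; exact h5 s r hs hsr hr

theorem SA_sub (n : ℕ) (hn : 2 ≤ n) (N : ℕ) : ∀ m m' : ℕ → ℕ, ∑ l ∈ Icc 1 n, m' l = N →
    SA n (m + m') ⊆ SA n m + SA n m' := by
  induction N with
  | zero =>
    intro m m' h x hx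
    have h0 : ∀ l, 1 ≤ l → l ≤ n → m' l = 0 := fun l h1 h2 =>
      (Finset.sum_eq_zero_iff.1 h) l (Finset.mem_Icc.2 ⟨h1, h2⟩)
    rw [SA_congr n hn (m + m') m (fun l h1 h2 => by simp [h0 l h1 h2])] at hx
    refine ⟨x, hx, 0, ?_, by simp⟩
    exact ⟨by simp, by simp, by simp, by simp, by simp, by simp⟩
  | succ N ih =>
    intro m m' h x hx
    obtain ⟨k, hk, hk0⟩ : ∃ k ∈ Icc 1 n, m' k ≠ 0 := by
      by_contra hcon
      push Not at hcon
      rw [Finset.sum_eq_zero hcon] at h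
      omega
    obtain ⟨p, rfl⟩ : ∃ p : ℕ → ℕ, m' = p + Pi.single k 1 := by
      refine ⟨m' - Pi.single k 1, ?_⟩
      funext l
      by_cases hl : l = k
      · subst hl; simp only [Pi.add_apply, Pi.sub_apply, Pi.single_eq_same]; omega
      · simp [Pi.single_eq_of_ne hl]
    have hp : ∑ l ∈ Icc 1 n, p l = N := by
      simp only [Pi.add_apply, Finset.sum_add_distrib] at h
      rw [Finset.sum_pi_single', if_pos hk] at h
      omega
    rw [Finset.mem_Icc] at hk
    rw [← add_assoc] at hx
    obtain ⟨y, hy, z, hz, rfl⟩ := SA_step n hn (m + p) k hk.1 hk.2 hx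
    obtain ⟨u, hu, v, hv, rfl⟩ := ih m p hp hy
    exact ⟨u, hu, v + z, SA_add_sub n hn _ _ ⟨v, hv, z, hz, rfl⟩, by simp [add_assoc]⟩

/-- Minkowski sum property `S_A(m + m') = S_A(m) + S_A(m')` (type `A` case of the paper's
Lemma `S_w(λ) + S_w(μ) = S_w(λ + μ)`). -/
theorem SA_add_eq_minkowski (n : ℕ) (hn : 2 ≤ n) (m m' : ℕ → ℕ) :
    SA n (m + m') = SA n m + SA n m' := by
  exact Set.Subset.antisymm (SA_sub n hn _ m m' rfl) (SA_add_sub n hn m m')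
end

section
/- For all m, m' ∈ ℕ^n one has the Minkowski sum identity S_C(m + m') = S_C(m) + S_C(m'): every element of S_C(m + m') can be written as x + y with x ∈ S_C(m) and y ∈ S_C(m'), and conversely every such sum x + y lies in S_C(m + m'). (This is the type-C case of the paper's Lemma that S_w(λ) + S_w(μ) = S_w(λ + μ).) -/
open Finset
open scoped Pointwise

/-- The lattice-point set `S_C(m)` of the polytope `P_w(λ)` in type `C_n`, where
`w = s_1 ⋯ s_{n-1} s_n s_{n-1} ⋯ s_1` and `λ = m_1 ω_1 + ⋯ + m_n ω_n`.
A point is a 1-based tuple `c_1, …, c_{2n-1}` of nonnegative integers (all other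
coordinates vanish), subject to the Dyck-path inequalities (C1)–(C2), the degree-path
inequalities (C3) and the inequalities (C4) from paths with coefficients. -/
def SC (n : ℕ) (m : ℕ → ℕ) : Set (ℕ → ℕ) :=
  {c | (∀ l, (l = 0 ∨ 2 * n - 1 < l) → c l = 0) ∧
    (∀ j, 1 ≤ j → j < n →
      ∑ l ∈ Icc 1 j, c l ≤ ∑ l ∈ Icc 1 j, m l) ∧
    ((∑ l ∈ Icc 1 (n - 1), c l) + c (2 * n - 1) ≤ ∑ l ∈ Icc 1 n, m l) ∧
    (∀ j, 2 ≤ j → j ≤ n →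
      (∑ l ∈ Icc 1 (2 * n - j), c l) + c (2 * n - 1) ≤
        (∑ l ∈ Icc 1 (j - 1), m l) + 2 * ∑ l ∈ Icc j n, m l) ∧
    (∀ j k, 2 ≤ j → j ≤ n → j - 1 ≤ k → k < n →
      2 * (∑ l ∈ Icc 1 k, c l) + (∑ l ∈ Icc (k + 1) (2 * n - j), c l) + 2 * c (2 * n - 1) ≤
        (∑ l ∈ Icc 1 (j - 1), m l) + 2 * (∑ l ∈ Icc j n, m l) + ∑ l ∈ Icc 1 k, m l)}

/-- Prefix sums. -/
def preSum (c : ℕ → ℕ) (t : ℕ) : ℕ := ∑ l ∈ Icc 1 t, c l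

theorem preSum_add (c d : ℕ → ℕ) (t : ℕ) : preSum (c + d) t = preSum c t + preSum d t := by
  simp [preSum, Finset.sum_add_distrib]

theorem preSum_succ (c : ℕ → ℕ) (t : ℕ) : preSum c (t + 1) = preSum c t + c (t + 1) := by
  simp [preSum, Finset.sum_Icc_succ_top]

theorem preSum_zero (c : ℕ → ℕ) : preSum c 0 = 0 := by simp [preSum]

theorem preSum_mono (c : ℕ → ℕ) {s t : ℕ} (h : s ≤ t) : preSum c s ≤ preSum c t := by
  induction t, h using Nat.le_induction with
  | base => exact le_rfl
  | succ t _ ih => rw [preSum_succ]; omega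

theorem preSum_split (c : ℕ → ℕ) {s t : ℕ} (h : s ≤ t) :
    preSum c s + ∑ l ∈ Icc (s + 1) t, c l = preSum c t := by
  induction t, h using Nat.le_induction with
  | base => simp
  | succ t hst ih => rw [preSum_succ, Finset.sum_Icc_succ_top (by omega)]; omega

theorem preSum_single (p t : ℕ) (hp : 1 ≤ p) :
    (t < p → preSum (Pi.single p 1) t = 0) ∧ (p ≤ t → preSum (Pi.single p 1) t = 1) := by
  induction t with
  | zero => exact ⟨fun _ => preSum_zero _, fun h => by omega⟩
  | succ t ih =>
    rw [preSum_succ, Pi.single_apply]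
    split_ifs with h <;> omega

/-- First nonzero entry after position `s`. -/
theorem first_after (c : ℕ → ℕ) (s N : ℕ) :
    (∀ t, s ≤ t → t ≤ N → preSum c t = preSum c s) ∨
    ∃ q, s < q ∧ q ≤ N ∧ 0 < c q ∧ (∀ t, s ≤ t → t < q → preSum c t = preSum c s) := by
  induction N with
  | zero => left; intro t h1 h2; have : t = s := by omega
            rw [this]
  | succ N ih =>
    rcases ih with h | ⟨q, h1, h2, h3, h4⟩
    · by_cases hs : s ≤ N
      · by_cases hc : c (N + 1) = 0
        · left
          intro t h1 h2
          rcases Nat.lt_or_ge N t with h5 | h5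
          · have : t = N + 1 := by omega
            rw [this, preSum_succ, hc, h N hs le_rfl]; rfl
          · exact h t h1 h5
        · right
          exact ⟨N + 1, by omega, le_rfl, by omega, fun t h1 h2 => h t h1 (by omega)⟩
      · left
        intro t h1 h2
        have : t = s := by omega
        rw [this]
    · right; exact ⟨q, h1, by omega, h3, h4⟩

theorem mem_SC_iff (n : ℕ) (hn : 2 ≤ n) (m c : ℕ → ℕ) :
    c ∈ SC n m ↔ (∀ l, (l = 0 ∨ 2 * n - 1 < l) → c l = 0) ∧
      (∀ k, 1 ≤ k → k < n → preSum c k ≤ preSum m k) ∧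
      (preSum c (n - 1) + c (2 * n - 1) ≤ preSum m n) ∧
      (∀ j, 1 ≤ j → j < n →
        preSum c (2 * n - 1 - j) + c (2 * n - 1) + preSum m j ≤ 2 * preSum m n) ∧
      (∀ j k, 1 ≤ j → j ≤ k → k < n →
        preSum c k + preSum c (2 * n - 1 - j) + 2 * c (2 * n - 1) + preSum m j ≤
          2 * preSum m n + preSum m k) := by
  constructor
  · rintro ⟨h0, h1, h2, h3, h4⟩
    refine ⟨h0, h1, h2, ?_, ?_⟩
    · intro j hj hjn
      have a := h3 (j + 1) (by omega) (by omega)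
      have b := preSum_split m (s := j) (t := n) (by omega)
      rw [show 2 * n - (j + 1) = 2 * n - 1 - j by omega, show j + 1 - 1 = j by omega] at a
      simp only [preSum] at *
      omega
    · intro j k hj hjk hkn
      have a := h4 (j + 1) k (by omega) (by omega) (by omega) hkn
      have b := preSum_split m (s := j) (t := n) (by omega)
      have d := preSum_split c (s := k) (t := 2 * n - 1 - j) (by omega)
      rw [show 2 * n - (j + 1) = 2 * n - 1 - j by omega, show j + 1 - 1 = j by omega] at a
      simp only [preSum] at *
      omega
  · rintro ⟨h0, h1, h2, h3, h4⟩
    refine ⟨h0, h1, h2, ?_, ?_⟩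
    · intro j hj hjn
      obtain ⟨j, rfl⟩ : ∃ i, j = i + 1 := ⟨j - 1, by omega⟩
      have a := h3 j (by omega) (by omega)
      have b := preSum_split m (s := j) (t := n) (by omega)
      rw [show 2 * n - (j + 1) = 2 * n - 1 - j by omega, show j + 1 - 1 = j by omega]
      simp only [preSum] at *
      omega
    · intro j k hj hjn hjk hkn
      obtain ⟨j, rfl⟩ : ∃ i, j = i + 1 := ⟨j - 1, by omega⟩
      have a := h4 j k (by omega) (by omega) hkn
      have b := preSum_split m (s := j) (t := n) (by omega)
      have d := preSum_split c (s := k) (t := 2 * n - 1 - j) (by omega)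
      rw [show 2 * n - (j + 1) = 2 * n - 1 - j by omega, show j + 1 - 1 = j by omega]
      simp only [preSum] at *
      omega

theorem SC_add_mem (n : ℕ) (hn : 2 ≤ n) (m m' x y : ℕ → ℕ) (hx : x ∈ SC n m)
    (hy : y ∈ SC n m') : x + y ∈ SC n (m + m') := by
  rw [mem_SC_iff n hn] at *
  obtain ⟨a0, a1, a2, a3, a4⟩ := hx
  obtain ⟨b0, b1, b2, b3, b4⟩ := hy
  simp only [preSum_add, Pi.add_apply]
  refine ⟨fun l hl => by rw [a0 l hl, b0 l hl], fun k h1 h2 => ?_, by omega,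
    fun j h1 h2 => ?_, fun j k h1 h2 h3 => ?_⟩
  · have := a1 k h1 h2; have := b1 k h1 h2; omega
  · have := a3 j h1 h2; have := b3 j h1 h2; omega
  · have := a4 j k h1 h2 h3; have := b4 j k h1 h2 h3; omega

theorem exists_sub_single (c : ℕ → ℕ) (p : ℕ) (h : 0 < c p) : ∃ c' : ℕ → ℕ, c = Pi.single p 1 + c' := by
  refine ⟨fun l => c l - Pi.single (M := fun _ => ℕ) p 1 l, ?_⟩
  funext l
  simp only [Pi.add_apply, Pi.single_apply]
  split_ifs with h1
  · subst h1; omega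
  · omega

/-- The zero element lies in every `SC n m`. -/
theorem zero_mem_SC (n : ℕ) (hn : 2 ≤ n) (m : ℕ → ℕ) : (0 : ℕ → ℕ) ∈ SC n m := by
  rw [mem_SC_iff n hn]
  have h0 : ∀ t, preSum 0 t = 0 := fun t => by simp [preSum]
  simp only [h0, Pi.zero_apply]
  refine ⟨fun _ _ => by trivial, fun k _ _ => by omega, by omega, fun j h1 h2 => ?_,
    fun j k h1 h2 h3 => ?_⟩
  · have := preSum_mono m (s := j) (t := n) (by omega); omega
  · have := preSum_mono m (s := j) (t := n) (by omega); omega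

theorem single_mem (n : ℕ) (hn : 2 ≤ n) (i p : ℕ) (hi : 1 ≤ i) (hin : i ≤ n) (hp : i ≤ p)
    (hpn : p ≤ 2 * n - 1) : (Pi.single p 1 : ℕ → ℕ) ∈ SC n (Pi.single i 1) := by
  rw [mem_SC_iff n hn]
  have hM := fun t => preSum_single i t hi
  have hX := fun t => preSum_single p t (by omega)
  have hMn := hM n
  have hz : (p = 2 * n - 1 ∧ (Pi.single p 1 : ℕ → ℕ) (2 * n - 1) = 1) ∨
      (p < 2 * n - 1 ∧ (Pi.single p 1 : ℕ → ℕ) (2 * n - 1) = 0) := by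
    rw [Pi.single_apply]; split_ifs <;> omega
  refine ⟨fun l hl => ?_, fun k h1 h2 => ?_, ?_, fun j h1 h2 => ?_, fun j k h1 h2 h3 => ?_⟩
  · rw [Pi.single_apply]; split_ifs <;> omega
  · have := hM k; have := hX k; omega
  · have := hX (n - 1); omega
  · have := hM j; have := hX (2 * n - 1 - j); omega
  · have := hM j; have := hM k; have := hX k; have := hX (2 * n - 1 - j); omega

theorem pair_mem (n : ℕ) (hn : 2 ≤ n) (i p q : ℕ) (hi : 1 ≤ i) (hin : i ≤ n) (hp : i ≤ p)
    (hpn : p < 2 * n - 1) (hq : 2 * n - i ≤ q) (hqn : q < 2 * n - 1) :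
    (Pi.single p 1 + Pi.single q 1 : ℕ → ℕ) ∈ SC n (Pi.single i 1) := by
  rw [mem_SC_iff n hn]
  have hM := fun t => preSum_single i t hi
  have hX := fun t => preSum_single p t (by omega)
  have hQ := fun t => preSum_single q t (by omega)
  have hMn := hM n
  have hz : (Pi.single p 1 : ℕ → ℕ) (2 * n - 1) = 0 := by
    rw [Pi.single_apply]; split_ifs <;> omega
  have hz' : (Pi.single q 1 : ℕ → ℕ) (2 * n - 1) = 0 := by
    rw [Pi.single_apply]; split_ifs <;> omega
  simp only [preSum_add, Pi.add_apply]
  refine ⟨fun l hl => ?_, fun k h1 h2 => ?_, ?_, fun j h1 h2 => ?_, fun j k h1 h2 h3 => ?_⟩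
  · rw [Pi.single_apply, Pi.single_apply]; split_ifs <;> omega
  · have := hM k; have := hX k; have := hQ k; omega
  · have := hX (n - 1); have := hQ (n - 1); omega
  · have := hM j; have := hX (2 * n - 1 - j); have := hQ (2 * n - 1 - j); omega
  · have := hM j; have := hM k; have := hX k; have := hX (2 * n - 1 - j)
    have := hQ k; have := hQ (2 * n - 1 - j); omega

/-- Peeling off `e_{2n-1}`. -/
theorem peel_z (n : ℕ) (hn : 2 ≤ n) (i : ℕ) (hi : 1 ≤ i) (hin : i ≤ n) (m c' : ℕ → ℕ)
    (hm : ∀ t, t < i → preSum m t = 0)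
    (hc : Pi.single (2 * n - 1) 1 + c' ∈ SC n (Pi.single i 1 + m))
    (hx : ∀ k, i ≤ k → k < n → preSum c' k ≤ preSum m k) : c' ∈ SC n m := by
  rw [mem_SC_iff n hn] at *
  have hM := fun t => preSum_single i t hi
  have hX := fun t => preSum_single (2 * n - 1) t (by omega)
  have hMn := hM n
  simp only [preSum_add, Pi.add_apply, Pi.single_eq_same] at hc
  obtain ⟨a0, a1, a2, a3, a4⟩ := hc
  have e1 : ∀ k, 1 ≤ k → k < n → preSum c' k ≤ preSum m k := by
    intro k h1 h2
    by_cases h : i ≤ k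
    · exact hx k h h2
    · have := a1 k h1 h2; have := hM k; have := hX k; omega
  have e4 : ∀ j k, 1 ≤ j → j ≤ k → k < n →
        preSum c' k + preSum c' (2 * n - 1 - j) + 2 * c' (2 * n - 1) + preSum m j ≤
          2 * preSum m n + preSum m k := by
    intro j k h1 h2 h3
    have := a4 j k h1 h2 h3; have := a4 j j h1 le_rfl (by omega)
    have := e1 k (by omega) h3
    have := hM j; have := hM k; have := hX k; have := hX j; have := hX (2 * n - 1 - j)
    have := hm j
    omega
  refine ⟨fun l hl => ?_, e1, ?_, fun j h1 h2 => ?_, e4⟩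
  · have := a0 l hl; omega
  · have := hX (n - 1); omega
  · have := a3 j h1 h2; have := a4 j j h1 le_rfl h2
    have := hM j; have := hX (2 * n - 1 - j); have := hX j; have := hm j
    omega

/-- Peeling off `d` (which is `e_p` or `e_p + e_q`). -/
theorem peel_d (n : ℕ) (hn : 2 ≤ n) (i p : ℕ) (hi : 1 ≤ i) (hin : i ≤ n) (hip : i ≤ p)
    (hp : p < 2 * n - 1) (m c' d : ℕ → ℕ)
    (hm : ∀ t, t < i → preSum m t = 0)
    (hc : d + c' ∈ SC n (Pi.single i 1 + m))
    (hfirst : ∀ t, t < p → preSum d t + preSum c' t = 0)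
    (hdz : d (2 * n - 1) = 0)
    (hdp : ∀ t, p ≤ t → 1 ≤ preSum d t)
    (hdq : ∀ t, 2 * n - 1 - i ≤ t → t < 2 * n - 1 → p ≤ t →
      2 ≤ preSum d t ∨ (preSum d t = 1 ∧ preSum c' t = preSum c' (2 * n - 1 - i)))
    (hx : c' (2 * n - 1) = 0 ∨
      ∃ k, i ≤ k ∧ k < n ∧ preSum d k + preSum c' k = 1 + preSum m k) : c' ∈ SC n m := by
  rw [mem_SC_iff n hn] at *
  have hM := fun t => preSum_single i t hi
  have hMn := hM n
  simp only [preSum_add, Pi.add_apply] at hc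
  obtain ⟨a0, a1, a2, a3, a4⟩ := hc
  have mono : ∀ j, j ≤ n → preSum m j ≤ preSum m n := fun j h => preSum_mono m h
  have hzk : c' (2 * n - 1) = 0 ∨ p < n := by
    rcases hx with hx | ⟨k0, hk1, hk2, hk3⟩
    · exact Or.inl hx
    · have := hfirst k0; omega
  have e1 : ∀ k, 1 ≤ k → k < n → preSum c' k ≤ preSum m k := by
    intro k h1 h2
    have := a1 k h1 h2; have := hM k; have := hfirst k; have := hdp k
    omega
  have e3 : ∀ j, 1 ≤ j → j < n →
        preSum c' (2 * n - 1 - j) + c' (2 * n - 1) + preSum m j ≤ 2 * preSum m n := by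
    intro j h1 h2
    clear hx
    have := a3 j h1 h2; have := a3 i hi; have := hM j; have := hM i
    have := hfirst (2 * n - 1 - j); have := hdp (2 * n - 1 - j); have := hdq (2 * n - 1 - j)
    have := hm j; have := mono j; have := mono i; have := hfirst (2 * n - 1 - i)
    have := hdp (2 * n - 1 - i)
    omega
  refine ⟨fun l hl => ?_, e1, ?_, e3, fun j k h1 h2 h3 => ?_⟩
  · have := a0 l hl; omega
  · have := hfirst (n - 1); have := hdp (n - 1); omega
  · rcases hx with hx | ⟨k0, hk1, hk2, hk3⟩
    · have := e3 j h1 (by omega); have := e1 k (by omega) h3; omega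
    · have hpk : p ≤ k0 := by
        by_contra h
        have := hfirst k0; omega
      have hMj := hM j; have hMi := hM i; have hMk := hM k; have hMk0 := hM k0
      have mj := hm j; have mk := hm k
      have fk := hfirst k; have dk := hdp k
      have dj := hdp (2 * n - 1 - j) (by omega)
      have di := hdp (2 * n - 1 - i) (by omega)
      have b1 := a4 j k h1 h2 h3
      have b2 := a4 i k0 hi hk1 hk2
      by_cases hji : j < i
      · have q := hdq (2 * n - 1 - j) (by omega) (by omega) (by omega)
        have b3 := a4 j k0 h1 (by omega) hk2
        by_cases hik : i ≤ k
        · have b4 := a4 i k hi hik h3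
          omega
        · omega
      · by_cases hkp : p ≤ k
        · omega
        · have b3 := a4 j k0 h1 (by omega) hk2
          omega

theorem peel (n : ℕ) (hn : 2 ≤ n) (i : ℕ) (hi : 1 ≤ i) (hin : i ≤ n) (m c : ℕ → ℕ)
    (hm : ∀ t, t < i → preSum m t = 0) (hc : c ∈ SC n (Pi.single i 1 + m)) :
    ∃ d ∈ SC n (Pi.single i 1), ∃ c' ∈ SC n m, c = d + c' := by
  have hM := fun t => preSum_single i t hi
  have hc0 := hc
  rw [mem_SC_iff n hn] at hc0
  simp only [preSum_add] at hc0
  obtain ⟨a0, a1, a2, a3, a4⟩ := hc0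
  by_cases hcase : 0 < c (2 * n - 1) ∧ ∀ k, i ≤ k → k < n → preSum c k < 1 + preSum m k
  · obtain ⟨hz, hx⟩ := hcase
    obtain ⟨c', rfl⟩ := exists_sub_single c _ hz
    refine ⟨_, single_mem n hn i (2 * n - 1) hi hin (by omega) le_rfl, c', ?_, rfl⟩
    refine peel_z n hn i hi hin m c' hm hc fun k h1 h2 => ?_
    have := hx k h1 h2
    rw [preSum_add] at this
    omega
  have hx : c (2 * n - 1) = 0 ∨ ∃ k, i ≤ k ∧ k < n ∧ preSum c k = 1 + preSum m k := by
    by_contra hcon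
    push Not at hcon
    apply hcase
    refine ⟨by omega, fun k h1 h2 => ?_⟩
    have := hcon.2 k h1 h2
    have := a1 k (by omega) h2
    have := hM k
    omega
  rcases first_after c 0 (2 * n - 2) with h | ⟨p, hp0, hpn, hcp, hfirst⟩
  · have h0 : ∀ t, t ≤ 2 * n - 2 → preSum c t = 0 := fun t ht => by
      rw [h t (by omega) ht, preSum_zero]
    have hz : c (2 * n - 1) = 0 := by
      rcases hx with hx | ⟨k, h1, h2, h3⟩
      · exact hx
      · have := h0 k (by omega); omega
    refine ⟨0, zero_mem_SC n hn _, c, ?_, by simp⟩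
    rw [mem_SC_iff n hn]
    refine ⟨a0, fun k h1 h2 => ?_, ?_, fun j h1 h2 => ?_, fun j k h1 h2 h3 => ?_⟩
    · have := h0 k (by omega); omega
    · have := h0 (n - 1) (by omega); omega
    · have := h0 (2 * n - 1 - j) (by omega)
      have := preSum_mono m (s := j) (t := n) (by omega); omega
    · have := h0 (2 * n - 1 - j) (by omega); have := h0 k (by omega)
      have := preSum_mono m (s := j) (t := n) (by omega); omega
  have hip : i ≤ p := by
    by_contra hlt
    have b1 := a1 p hp0 (by omega)
    have b2 := hm p (by omega)
    have b3 := (hM p).1 (by omega)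
    obtain ⟨p, rfl⟩ : ∃ r, p = r + 1 := ⟨p - 1, by omega⟩
    rw [preSum_succ c] at b1
    omega
  obtain ⟨c1, rfl⟩ := exists_sub_single c p hcp
  have hX := fun t => preSum_single p t hp0
  have hzp : (Pi.single p 1 : ℕ → ℕ) (2 * n - 1) = 0 := by
    rw [Pi.single_apply]; split_ifs <;> omega
  simp only [preSum_add, preSum_zero, Pi.add_apply] at hfirst hx
  rcases first_after c1 (2 * n - 1 - i) (2 * n - 2) with h | ⟨q, hq0, hqn, hcq, hq⟩
  · refine ⟨_, single_mem n hn i p hi hin hip (by omega), c1, ?_, rfl⟩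
    refine peel_d n hn i p hi hin hip (by omega) m c1 _ hm hc
      (fun t ht => hfirst t (by omega) ht) hzp
      (fun t ht => by have := hX t; omega) (fun t h1 h2 h3 => ?_) ?_
    · have := hX t; have := h t h1 (by omega); omega
    · rw [hzp] at hx; simpa using hx
  · obtain ⟨c2, rfl⟩ := exists_sub_single c1 q hcq
    have hQ := fun t => preSum_single q t (by omega)
    have hzq : (Pi.single q 1 : ℕ → ℕ) (2 * n - 1) = 0 := by
      rw [Pi.single_apply]; split_ifs <;> omega
    rw [← add_assoc] at hc ⊢
    simp only [preSum_add, Pi.add_apply] at hfirst hx hq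
    refine ⟨_, pair_mem n hn i p q hi hin hip (by omega) (by omega) (by omega), c2, ?_, rfl⟩
    refine peel_d n hn i p hi hin hip (by omega) m c2 _ hm hc
      (fun t ht => ?_) ?_ (fun t ht => ?_) (fun t h1 h2 h3 => ?_) ?_
    · rw [preSum_add]; have := hfirst t (by omega) ht; omega
    · rw [Pi.add_apply, hzp, hzq]
    · rw [preSum_add]; have := hX t; omega
    · rw [preSum_add]
      have := hX t; have := hQ t; have := hQ (2 * n - 1 - i); have := hq t h1
      omega
    · rw [hzp, hzq] at hx
      simpa [preSum_add, add_assoc] using hx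

theorem SC_sub (n : ℕ) (hn : 2 ≤ n) (N : ℕ) : ∀ m m' c : ℕ → ℕ, preSum (m + m') n = N →
    c ∈ SC n (m + m') → ∃ x ∈ SC n m, ∃ y ∈ SC n m', x + y = c := by
  induction N with
  | zero =>
    intro m m' c hN hc
    refine ⟨c, ?_, 0, zero_mem_SC n hn m', by simp⟩
    rw [mem_SC_iff n hn] at *
    have hz : ∀ t, t ≤ n → preSum m t = 0 ∧ preSum m' t = 0 := by
      intro t ht
      have := preSum_mono (m + m') ht
      simp only [preSum_add] at *
      omega
    simp only [preSum_add] at hc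
    obtain ⟨a0, a1, a2, a3, a4⟩ := hc
    have := hz n le_rfl
    refine ⟨a0, fun k h1 h2 => ?_, by omega, fun j h1 h2 => ?_, fun j k h1 h2 h3 => ?_⟩
    · have := a1 k h1 h2; have := hz k (by omega); omega
    · have := a3 j h1 h2; have := hz j (by omega); omega
    · have := a4 j k h1 h2 h3; have := hz j (by omega); have := hz k (by omega); omega
  | succ N ih =>
    intro m m' c hN hc
    rcases first_after (m + m') 0 n with h | ⟨i, h1, h2, h3, h4⟩
    · have := h n (by omega) le_rfl
      rw [preSum_zero] at this; omega
    · have hM := (preSum_single i n h1).2 h2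
      have hlow : ∀ t, t < i → preSum (m + m') t = 0 := fun t ht => by
        rw [h4 t (by omega) ht, preSum_zero]
      rcases Nat.eq_zero_or_pos (m i) with h5 | h5
      · have h6 : 0 < m' i := by simp only [Pi.add_apply] at h3; omega
        obtain ⟨m0, rfl⟩ := exists_sub_single m' i h6
        have e : m + (Pi.single i 1 + m0) = Pi.single i 1 + (m + m0) := by abel
        rw [e] at hc hN hlow
        simp only [preSum_add (Pi.single i 1)] at hN hlow
        obtain ⟨d, hd, c', hc', rfl⟩ := peel n hn i h1 h2 (m + m0) c
          (fun t ht => by have := hlow t ht; omega) hc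
        obtain ⟨x, hx, y, hy, rfl⟩ := ih m m0 c' (by omega) hc'
        exact ⟨x, hx, d + y, SC_add_mem n hn _ _ _ _ hd hy, by abel⟩
      · obtain ⟨m0, rfl⟩ := exists_sub_single m i h5
        have e : (Pi.single i 1 + m0) + m' = Pi.single i 1 + (m0 + m') := by abel
        rw [e] at hc hN hlow
        simp only [preSum_add (Pi.single i 1)] at hN hlow
        obtain ⟨d, hd, c', hc', rfl⟩ := peel n hn i h1 h2 (m0 + m') c
          (fun t ht => by have := hlow t ht; omega) hc
        obtain ⟨x, hx, y, hy, rfl⟩ := ih m0 m' c' (by omega) hc'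
        exact ⟨d + x, SC_add_mem n hn _ _ _ _ hd hx, y, hy, by abel⟩

/-- Minkowski sum property `S_C(m + m') = S_C(m) + S_C(m')` (type `C` case of the paper's
Lemma `S_w(λ) + S_w(μ) = S_w(λ + μ)`). -/
theorem SC_add_eq_minkowski (n : ℕ) (hn : 2 ≤ n) (m m' : ℕ → ℕ) :
    SC n (m + m') = SC n m + SC n m' := by
  ext c
  rw [Set.mem_add]
  constructor
  · intro hc
    exact SC_sub n hn _ m m' c rfl hc
  · rintro ⟨x, hx, y, hy, rfl⟩
    exact SC_add_mem n hn m m' x y hx hy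
end

section
/- For all m, m' ∈ ℕ^n one has the Minkowski sum identity S_D(m + m') = S_D(m) + S_D(m'): every element of S_D(m + m') can be written as x + y with x ∈ S_D(m) and y ∈ S_D(m'), and conversely every such sum x + y lies in S_D(m + m'). (This is the type-D case of the paper's Lemma that S_w(λ) + S_w(μ) = S_w(λ + μ).) -/
open Finset
open scoped Pointwise

/-- The quantity `Q_d(m) = (m_1 + ⋯ + m_{d-1}) + 2(m_d + ⋯ + m_{n-2}) + m_{n-1} + m_n`
appearing in the type-`D` inequalities. -/
def QD (n : ℕ) (m : ℕ → ℕ) (d : ℕ) : ℕ :=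
  (∑ l ∈ Icc 1 (d - 1), m l) + 2 * (∑ l ∈ Icc d (n - 2), m l) + m (n - 1) + m n

/-- The lattice-point set `S_D(m)` of the polytope `P_w(λ)` in type `D_n`, where
`w = s_1 ⋯ s_{n-1} s_n s_{n-2} ⋯ s_1` and `λ = m_1 ω_1 + ⋯ + m_n ω_n`.
A point is a triple `(a, b, d)` where `a` is the 1-based tuple `a_1, …, a_{n-1}`,
`b ∈ ℕ` and `d` is the 1-based tuple `d_2, …, d_{n-1}` (all other coordinates vanish),
subject to the Dyck-path inequalities (D1)–(D4), the degree-path inequalities (D5)–(D6)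
and the inequalities (D7) from paths with coefficients. -/
def SD (n : ℕ) (m : ℕ → ℕ) : Set ((ℕ → ℕ) × ℕ × (ℕ → ℕ)) :=
  {x | (∀ l, (l = 0 ∨ n - 1 < l) → x.1 l = 0) ∧
    (∀ l, (l ≤ 1 ∨ n - 1 < l) → x.2.2 l = 0) ∧
    (∀ j, 1 ≤ j → j ≤ n - 1 →
      ∑ l ∈ Icc 1 j, x.1 l ≤ ∑ l ∈ Icc 1 j, m l) ∧
    ((∑ l ∈ Icc 1 (n - 2), x.1 l) + x.2.1 ≤ (∑ l ∈ Icc 1 (n - 2), m l) + m n) ∧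
    ((∑ l ∈ Icc 1 (n - 1), x.1 l) + x.2.2 (n - 1) ≤ ∑ l ∈ Icc 1 n, m l) ∧
    ((∑ l ∈ Icc 1 (n - 2), x.1 l) + x.2.1 + x.2.2 (n - 1) ≤ ∑ l ∈ Icc 1 n, m l) ∧
    (∀ d, 2 ≤ d → d ≤ n - 2 →
      (∑ l ∈ Icc 1 (n - 1), x.1 l) + ∑ l ∈ Icc d (n - 1), x.2.2 l ≤ QD n m d) ∧
    (∀ d, 2 ≤ d → d ≤ n - 2 →
      (∑ l ∈ Icc 1 (n - 2), x.1 l) + x.2.1 + ∑ l ∈ Icc d (n - 1), x.2.2 l ≤ QD n m d) ∧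
    (∀ d k, 2 ≤ d → d ≤ n - 1 → d - 1 ≤ k → k ≤ n - 2 →
      2 * (∑ l ∈ Icc 1 k, x.1 l) + (∑ l ∈ Icc (k + 1) (n - 1), x.1 l) + x.2.1 +
          ∑ l ∈ Icc d (n - 1), x.2.2 l ≤
        QD n m d + ∑ l ∈ Icc 1 k, m l)}

/-- Partial sums. -/
def pS (f : ℕ → ℕ) (k : ℕ) : ℕ := ∑ l ∈ Icc 1 k, f l

/-- Tail sums. -/
def tS (N : ℕ) (f : ℕ → ℕ) (e : ℕ) : ℕ := ∑ l ∈ Icc (e + 1) (N + 1), f l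

/-- The inequalities in terms of partial sums. -/
def KD (N u v p q : ℕ) (A M T : ℕ → ℕ) : Prop :=
  (∀ j, j ≤ N → A j ≤ M j) ∧ A N + p ≤ M N + u ∧ A N + q ≤ M N + v ∧
  (∀ e, 1 ≤ e → e ≤ N → A N + p + T e + M e ≤ 2 * M N + u + v) ∧
  (∀ e, 1 ≤ e → e ≤ N → A N + q + T e + M e ≤ 2 * M N + u + v) ∧
  (∀ e k, 1 ≤ e → e ≤ k → k ≤ N →
    A k + A N + p + q + T e + M e ≤ 2 * M N + u + v + M k)

/-- Stronger, simpler inequalities. -/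
def KZ (N u v p q : ℕ) (A M T : ℕ → ℕ) : Prop :=
  (∀ j, j ≤ N → A j ≤ M j) ∧ A N + p ≤ M N + u ∧ A N + q ≤ M N + v ∧
  (∀ e, 1 ≤ e → e ≤ N → A N + p + q + T e + M e ≤ 2 * M N + u + v)

lemma KZ.toKD {N u v p q : ℕ} {A M T : ℕ → ℕ} (h : KZ N u v p q A M T) :
    KD N u v p q A M T := by
  obtain ⟨h1, h2, h3, h4⟩ := h
  refine ⟨h1, h2, h3, ?_, ?_, ?_⟩
  · intro e he he'
    have := h4 e he he'
    omega
  · intro e he he'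
    have := h4 e he he'
    omega
  · intro e k he he' hk
    have := h4 e he (he'.trans hk)
    have := h1 k hk
    omega

lemma pS_succ (f : ℕ → ℕ) (k : ℕ) : pS f (k + 1) = pS f k + f (k + 1) := by
  unfold pS
  rw [Finset.sum_Icc_succ_top (by omega)]

lemma pS_zero (f : ℕ → ℕ) : pS f 0 = 0 := by simp [pS]

lemma pS_split (f : ℕ → ℕ) (j k : ℕ) (h : j ≤ k) :
    pS f k = pS f j + ∑ l ∈ Icc (j + 1) k, f l := by
  induction k, h using Nat.le_induction with
  | base => simp
  | succ k hk ih =>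
    rw [pS_succ, ih, Finset.sum_Icc_succ_top (by omega)]
    omega

lemma pS_mono (f : ℕ → ℕ) {j k : ℕ} (h : j ≤ k) : pS f j ≤ pS f k := by
  rw [pS_split f j k h]; omega

lemma tS_succ (N : ℕ) (f : ℕ → ℕ) (e : ℕ) (h : e ≤ N) :
    tS N f e = f (e + 1) + tS N f (e + 1) := by
  have h1 := pS_split f e (N + 1) (by omega)
  have h2 := pS_split f (e + 1) (N + 1) (by omega)
  have h3 := pS_succ f e
  unfold tS
  omega

lemma tS_anti (N : ℕ) (f : ℕ → ℕ) {e e' : ℕ} (h : e ≤ e') : tS N f e' ≤ tS N f e := by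
  unfold tS
  apply Finset.sum_le_sum_of_subset
  exact Finset.Icc_subset_Icc (by omega) le_rfl

lemma pS_add (f g : ℕ → ℕ) (k : ℕ) : pS (f + g) k = pS f k + pS g k := by
  simp [pS, Finset.sum_add_distrib]

lemma tS_add (N : ℕ) (f g : ℕ → ℕ) (k : ℕ) : tS N (f + g) k = tS N f k + tS N g k := by
  simp [tS, Finset.sum_add_distrib]

lemma pS_single (j k : ℕ) (hj : 1 ≤ j) : pS (Pi.single j 1) k = if j ≤ k then 1 else 0 := by
  unfold pS
  rw [Finset.sum_pi_single']
  simp [hj]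

lemma tS_single (N j k : ℕ) (hj : j ≤ N + 1) :
    tS N (Pi.single j 1) k = if k < j then 1 else 0 := by
  unfold tS
  rw [Finset.sum_pi_single']
  simp only [Finset.mem_Icc]
  split_ifs <;> omega

lemma pS_z (k : ℕ) : pS 0 k = 0 := by simp [pS]

lemma tS_z (N k : ℕ) : tS N 0 k = 0 := by simp [tS]

lemma single_val (j k : ℕ) : (Pi.single j 1 : ℕ → ℕ) k = if k = j then 1 else 0 := by
  simp [Pi.single_apply]

lemma exists_sub_single_s3 (f : ℕ → ℕ) (k : ℕ) (h : 0 < f k) :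
    ∃ f0 : ℕ → ℕ, f = f0 + Pi.single k 1 := by
  refine ⟨f - Pi.single k 1, ?_⟩
  funext l
  simp only [Pi.add_apply, Pi.sub_apply, single_val]
  split_ifs with hl
  · subst hl; omega
  · omega

lemma SD_iff (N : ℕ) (hN : 2 ≤ N) (m a : ℕ → ℕ) (b : ℕ) (d : ℕ → ℕ) :
    (a, b, d) ∈ SD (N + 2) m ↔
      (∀ l, (l = 0 ∨ N + 1 < l) → a l = 0) ∧ (∀ l, (l ≤ 1 ∨ N + 1 < l) → d l = 0) ∧
      KD N (m (N + 1)) (m (N + 2)) (a (N + 1)) b (pS a) (pS m) (tS N d) := by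
  have e1 : N + 2 - 1 = N + 1 := by omega
  have e2 : N + 2 - 2 = N := by omega
  have hQ : ∀ e, e ≤ N → QD (N + 2) m (e + 1) + pS m e
      = 2 * pS m N + m (N + 1) + m (N + 2) := by
    intro e he
    have := pS_split m e N he
    simp only [QD, e1, e2, Nat.add_sub_cancel]
    change pS m e + _ + _ + _ + _ = _
    omega
  have hdN : d (N + 1) = tS N d N := by simp [tS]
  have ha1 := pS_succ a N
  have hm1 := pS_succ m N
  have hm2 : pS m (N + 1 + 1) = pS m (N + 1) + m (N + 2) := pS_succ m (N + 1)
  have hsp : ∀ k, k ≤ N → pS a k + ∑ l ∈ Icc (k + 1) (N + 1), a l = pS a N + a (N + 1) := by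
    intro k hk
    have := pS_split a k (N + 1) (by omega)
    omega
  simp only [SD, Set.mem_ofPred_eq, e1, e2]
  refine and_congr_right fun _ => and_congr_right fun _ => ?_
  change ((∀ j, 1 ≤ j → j ≤ N + 1 → pS a j ≤ pS m j) ∧ (pS a N + b ≤ pS m N + m (N + 2)) ∧
    (pS a (N + 1) + d (N + 1) ≤ pS m (N + 1 + 1)) ∧
    (pS a N + b + d (N + 1) ≤ pS m (N + 1 + 1)) ∧
    (∀ d', 2 ≤ d' → d' ≤ N → pS a (N + 1) + ∑ l ∈ Icc d' (N + 1), d l ≤ QD (N + 2) m d') ∧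
    (∀ d', 2 ≤ d' → d' ≤ N → pS a N + b + ∑ l ∈ Icc d' (N + 1), d l ≤ QD (N + 2) m d') ∧
    (∀ d' k, 2 ≤ d' → d' ≤ N + 1 → d' - 1 ≤ k → k ≤ N →
      2 * pS a k + (∑ l ∈ Icc (k + 1) (N + 1), a l) + b + ∑ l ∈ Icc d' (N + 1), d l ≤
        QD (N + 2) m d' + pS m k)) ↔ _
  constructor
  · rintro ⟨h1, h2, h3, h4, h5, h6, h7⟩
    refine ⟨?_, ?_, ?_, ?_, ?_, ?_⟩
    · intro j hj
      rcases Nat.eq_zero_or_pos j with rfl | hj0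
      · simp [pS_zero]
      · exact h1 j hj0 (by omega)
    · have := h1 (N + 1) (by omega) le_rfl
      omega
    · omega
    · intro e he heN
      rcases Nat.lt_or_ge e N with h | h
      · have h5' := h5 (e + 1) (by omega) (by omega)
        have := hQ e heN
        change _ + tS N d e ≤ _ at h5'
        omega
      · obtain rfl : e = N := by omega
        omega
    · intro e he heN
      rcases Nat.lt_or_ge e N with h | h
      · have h5' := h6 (e + 1) (by omega) (by omega)
        have := hQ e heN
        change _ + tS N d e ≤ _ at h5'
        omega
      · obtain rfl : e = N := by omega
        omega
    · intro e k he hek hk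
      have h7' := h7 (e + 1) k (by omega) (by omega) (by omega) hk
      have := hQ e (by omega)
      have := hsp k hk
      change _ + tS N d e ≤ _ at h7'
      omega
  · rintro ⟨h1, h2, h3, h4, h5, h6⟩
    refine ⟨?_, ?_, ?_, ?_, ?_, ?_, ?_⟩
    · intro j hj hj'
      rcases Nat.lt_or_ge N j with h | h
      · obtain rfl : j = N + 1 := by omega
        omega
      · exact h1 j h
    · omega
    · have := h4 N (by omega) le_rfl
      omega
    · have := h5 N (by omega) le_rfl
      omega
    · intro e he heN
      obtain ⟨e, rfl⟩ : ∃ e', e = e' + 1 := ⟨e - 1, by omega⟩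
      have := h4 e (by omega) (by omega)
      have := hQ e (by omega)
      change _ + tS N d e ≤ _
      omega
    · intro e he heN
      obtain ⟨e, rfl⟩ : ∃ e', e = e' + 1 := ⟨e - 1, by omega⟩
      have := h5 e (by omega) (by omega)
      have := hQ e (by omega)
      change _ + tS N d e ≤ _
      omega
    · intro e k he heN hek hk
      obtain ⟨e, rfl⟩ : ∃ e', e = e' + 1 := ⟨e - 1, by omega⟩
      have := h6 e k (by omega) (by omega) hk
      have := hQ e (by omega)
      have := hsp k hk
      change _ + tS N d e ≤ _
      omega

/-- Largest index `k ≤ i` with `d k > 0`. -/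
lemma exists_last_s3 (N : ℕ) (d : ℕ → ℕ) (i : ℕ) (hi : i ≤ N + 1) :
    (∀ e, e ≤ i → tS N d e = tS N d i) ∨
    ∃ k, 1 ≤ k ∧ k ≤ i ∧ 0 < d k ∧ ∀ e, k ≤ e → e ≤ i → tS N d e = tS N d i := by
  induction i with
  | zero =>
    left
    intro e he
    obtain rfl : e = 0 := by omega
    rfl
  | succ i ih =>
    by_cases hd : 0 < d (i + 1)
    · right
      refine ⟨i + 1, by omega, le_rfl, hd, fun e h1 h2 => ?_⟩
      obtain rfl : e = i + 1 := by omega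
      rfl
    · have hs := tS_succ N d i (by omega)
      rcases ih (by omega) with h | ⟨k, hk1, hk2, hk3, h⟩
      · left
        intro e he
        rcases Nat.lt_or_ge i e with h' | h'
        · obtain rfl : e = i + 1 := by omega
          rfl
        · have := h e h'
          omega
      · right
        refine ⟨k, hk1, by omega, hk3, fun e h1 h2 => ?_⟩
        rcases Nat.lt_or_ge i e with h' | h'
        · obtain rfl : e = i + 1 := by omega
          rfl
        · have := h e h1 h'
          omega

/-- Smallest index `j` in `[i, r]` with `a j > 0`. -/
lemma exists_first_s3 (a : ℕ → ℕ) (i r : ℕ) (hi : i ≤ r) :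
    (∀ e, i ≤ e → e ≤ r → pS a e = pS a i) ∨
    ∃ j, i < j ∧ j ≤ r ∧ 0 < a j ∧ ∀ e, i ≤ e → e < j → pS a e = pS a i := by
  induction r, hi using Nat.le_induction with
  | base =>
    left
    intro e h1 h2
    obtain rfl : e = i := by omega
    rfl
  | succ r hr ih =>
    rcases ih with h | ⟨j, h1, h2, h3, h4⟩
    · by_cases ha : 0 < a (r + 1)
      · right
        exact ⟨r + 1, by omega, le_rfl, ha, fun e h1 h2 => h e h1 (by omega)⟩
      · left
        intro e h1 h2
        rcases Nat.lt_or_ge r e with h' | h'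
        · obtain rfl : e = r + 1 := by omega
          have := pS_succ a r
          have := h r hr le_rfl
          omega
        · exact h e h1 h'
    · right
      exact ⟨j, h1, by omega, h3, h4⟩

/-- Second token: a `d_k` with `k ≤ i`. -/
lemma tok2 (N : ℕ) (m d : ℕ → ℕ) (i C : ℕ) (hi : 1 ≤ i) (hiN : i ≤ N) (hm : 0 < m i)
    (h : ∀ e, 1 ≤ e → e ≤ N → tS N d e + pS m e ≤ C) :
    ∃ d0 d2 : ℕ → ℕ, d = d0 + d2 ∧
      (∀ e, 1 ≤ e → e ≤ N → tS N d0 e + pS m e + (if e < i then 1 else 0) ≤ C) ∧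
      (∀ e, 1 ≤ e → tS N d2 e ≤ if e < i then 1 else 0) := by
  have hlt : ∀ e, e < i → pS m e < pS m i := by
    intro e he
    obtain ⟨i, rfl⟩ : ∃ i', i = i' + 1 := ⟨i - 1, by omega⟩
    have := pS_succ m i
    have := pS_mono m (show e ≤ i by omega)
    omega
  have hh := h i hi hiN
  rcases exists_last_s3 N d i (by omega) with hl | ⟨k, hk1, hk2, hk3, hl⟩
  · refine ⟨d, 0, by simp, ?_, ?_⟩
    · intro e he heN
      have := h e he heN
      split_ifs with hei
      · have := hl e hei.le
        have := hlt e hei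
        omega
      · omega
    · intro e he
      simp [tS_z]
  · obtain ⟨d0, rfl⟩ := exists_sub_single_s3 d k hk3
    refine ⟨d0, _, rfl, ?_, ?_⟩
    · intro e he heN
      have h1 := h e he heN
      have h2 := hl e
      have h3 := hlt e
      have h4 := tS_add N d0 (Pi.single k 1) e
      have h5 := tS_add N d0 (Pi.single k 1) i
      rw [tS_single N k _ (by omega)] at h4 h5
      split_ifs at * <;> omega
    · intro e he
      rw [tS_single N k _ (by omega)]
      split_ifs <;> omega

lemma d_token (N : ℕ) (d : ℕ → ℕ) (C : ℕ) (R : ℕ → ℕ)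
    (h : ∀ e, 1 ≤ e → e ≤ N → tS N d e + R e ≤ C)
    (h0 : ∀ e, 1 ≤ e → e ≤ N → R e + 1 ≤ C) :
    ∃ d0 d1 : ℕ → ℕ, d = d0 + d1 ∧ (∀ e, 1 ≤ e → e ≤ N → tS N d0 e + R e + 1 ≤ C) ∧
      (∀ e, tS N d1 e ≤ 1) := by
  have hz : tS N d (N + 1) = 0 := by simp [tS]
  rcases exists_last_s3 N d (N + 1) le_rfl with hl | ⟨k, hk1, hk2, hk3, hl⟩
  · refine ⟨d, 0, by simp, ?_, by simp [tS_z]⟩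
    intro e he heN
    have := hl e (by omega)
    have := h0 e he heN
    omega
  · obtain ⟨d0, rfl⟩ := exists_sub_single_s3 d k hk3
    refine ⟨d0, _, rfl, ?_, ?_⟩
    · intro e he heN
      have h1 := h e he heN
      have h2 := hl e
      have h3 := h0 e he heN
      have h4 := tS_add N d0 (Pi.single k 1) e
      rw [tS_single N k _ (by omega)] at h4
      split_ifs at * <;> omega
    · intro e
      rw [tS_single N k _ (by omega)]
      split_ifs <;> omega

/-- First token for `i ≤ N`. -/
lemma tok1 (N : ℕ) (m a d : ℕ → ℕ) (b i : ℕ) (hi : 1 ≤ i) (hiN : i ≤ N) (hm : 0 < m i)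
    (hK : KZ N (m (N + 1)) (m (N + 2)) (a (N + 1)) b (pS a) (pS m) (tS N d))
    (hc : a (N + 1) = 0 ∨ b = 0 ∨ pS a N = pS m N) :
    ∃ (a0 a1 : ℕ → ℕ) (b0 b1 : ℕ) (d0 d1 : ℕ → ℕ), a = a0 + a1 ∧ b = b0 + b1 ∧ d = d0 + d1 ∧
      (∀ j, j ≤ N → pS a0 j + (if i ≤ j then 1 else 0) ≤ pS m j) ∧
      pS a0 N + a0 (N + 1) + 1 ≤ pS m N + m (N + 1) ∧
      pS a0 N + b0 + 1 ≤ pS m N + m (N + 2) ∧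
      (∀ e, 1 ≤ e → e ≤ N → pS a0 N + a0 (N + 1) + b0 + tS N d0 e + pS m e + 1
        ≤ 2 * pS m N + m (N + 1) + m (N + 2)) ∧
      (∀ j, j ≤ N → pS a1 j ≤ if i ≤ j then 1 else 0) ∧
      (∀ e, pS a1 N + a1 (N + 1) + b1 + tS N d1 e ≤ 1) := by
  obtain ⟨h1, h2, h3, h4⟩ := hK
  have hlt : ∀ e, i ≤ e → pS m (i - 1) < pS m e := by
    intro e he
    obtain ⟨i, rfl⟩ : ∃ i', i = i' + 1 := ⟨i - 1, by omega⟩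
    have := pS_succ m i
    have := pS_mono m he
    simp only [Nat.add_sub_cancel]
    omega
  have hltN := hlt N hiN
  have h1i := h1 (i - 1) (by omega)
  rcases exists_first_s3 a (i - 1) (N + 1) (by omega) with hf | ⟨j, hj1, hj2, hj3, hf⟩
  · have hA := hf N (by omega) (by omega)
    have hA' := hf (N + 1) (by omega) (by omega)
    have hp := pS_succ a N
    have h1' : ∀ j, j ≤ N → pS a j + (if i ≤ j then 1 else 0) ≤ pS m j := by
      intro j hj
      have := h1 j hj
      have := hf j
      have := hlt j
      split_ifs <;> omega
    rcases Nat.eq_zero_or_pos b with hb | hb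
    · obtain ⟨d0, d1, rfl, hd0, hd1⟩ := d_token N d (2 * pS m N + m (N + 1) + m (N + 2))
        (fun e => pS a N + a (N + 1) + b + pS m e)
        (fun e he heN => by have := h4 e he heN; omega)
        (fun e he heN => by have := pS_mono m heN; omega)
      refine ⟨a, 0, b, 0, d0, d1, by simp, by simp, rfl, h1', by omega, by omega, ?_, ?_, ?_⟩
      · intro e he heN
        have := hd0 e he heN
        omega
      · simp [pS_z]
      · intro e
        have := hd1 e
        simpa [pS_z] using this
    · refine ⟨a, 0, b - 1, 1, d, 0, by simp, by omega, by simp, h1', by omega, by omega, ?_, ?_, ?_⟩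
      · intro e he heN
        have := h4 e he heN
        omega
      · simp [pS_z]
      · simp [pS_z, tS_z]
  · have hb : j = N + 1 → b = 0 := by
      intro hj
      have := hf N (by omega) (by omega)
      subst hj
      omega
    clear hc
    obtain ⟨a0, rfl⟩ := exists_sub_single_s3 a j hj3
    simp only [pS_add, pS_single j _ (show 1 ≤ j by omega), Pi.add_apply, single_val] at *
    refine ⟨a0, _, b, 0, d, 0, rfl, by simp, by simp, ?_, ?_, ?_, ?_, ?_, ?_⟩
    · intro k hk
      have h5 := h1 k hk
      have h6 := hf k
      have h7 := hlt k
      split_ifs at * <;> omega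
    · split_ifs at * <;> omega
    · have h6 := hf N
      split_ifs at * <;> omega
    · intro e he heN
      have h5 := h4 e he heN
      split_ifs at * <;> omega
    · intro k hk
      rw [pS_single j _ (by omega)]
      split_ifs <;> omega
    · intro e
      rw [pS_single j _ (by omega)]
      simp only [tS_z, single_val]
      split_ifs <;> omega

/-- Tokens for `i = N+1` and `i = N+2`. -/
lemma tokE (N : ℕ) (a d : ℕ → ℕ) (M : ℕ → ℕ) (hM : ∀ e, e ≤ N → M e ≤ M N) (u v b s t : ℕ)
    (hst : s + t = 1)
    (hK : KZ N (u + s) (v + t) (a (N + 1)) b (pS a) M (tS N d)) :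
    ∃ (a0 a1 : ℕ → ℕ) (b0 b1 : ℕ) (d0 d1 : ℕ → ℕ), a = a0 + a1 ∧ b = b0 + b1 ∧ d = d0 + d1 ∧
      KZ N u v (a0 (N + 1)) b0 (pS a0) M (tS N d0) ∧
      KZ N s t (a1 (N + 1)) b1 (pS a1) (fun _ => 0) (tS N d1) := by
  obtain ⟨h1, h2, h3, h4⟩ := hK
  have hcase : (s = 1 ∧ t = 0 ∧ 0 < a (N + 1)) ∨ (s = 0 ∧ t = 1 ∧ 0 < b) ∨
      (s = 1 ∧ t = 0 ∧ a (N + 1) = 0) ∨ (s = 0 ∧ t = 1 ∧ b = 0) := by omega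
  have h1N := h1 N le_rfl
  rcases hcase with ⟨rfl, rfl, hp⟩ | ⟨rfl, rfl, hp⟩ | hp
  · obtain ⟨a0, rfl⟩ := exists_sub_single_s3 a (N + 1) hp
    simp only [pS_add, pS_single (N + 1) _ (show 1 ≤ N + 1 by omega), Pi.add_apply,
      single_val] at *
    refine ⟨a0, _, b, 0, d, 0, rfl, by simp, by simp, ⟨?_, ?_, ?_, ?_⟩, ⟨?_, ?_, ?_, ?_⟩⟩
    · intro j hj
      have := h1 j hj
      omega
    · simp at *
      omega
    · simp at *
      omega
    · intro e he heN
      have := h4 e he heN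
      simp at *
      omega
    · intro j hj
      rw [pS_single _ _ (by omega)]
      split_ifs <;> omega
    · rw [pS_single _ _ (by omega)]
      simp
    · rw [pS_single _ _ (by omega)]
      simp
    · intro e he heN
      rw [pS_single _ _ (by omega)]
      simp [tS_z]
  · refine ⟨a, 0, b - 1, 1, d, 0, by simp, by omega, by simp, ⟨h1, ?_, ?_, ?_⟩, ⟨?_, ?_, ?_, ?_⟩⟩
    · omega
    · omega
    · intro e he heN
      have := h4 e he heN
      omega
    all_goals simp [pS_z, tS_z]
  · obtain ⟨d0, d1, rfl, hd0, hd1⟩ := d_token N d (2 * M N + u + v + 1)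
      (fun e => pS a N + a (N + 1) + b + M e)
      (fun e he heN => by have := h4 e he heN; omega)
      (fun e he heN => by have := hM e heN; omega)
    refine ⟨a, 0, b, 0, d0, d1, by simp, by simp, rfl, ⟨h1, ?_, ?_, ?_⟩, ⟨?_, ?_, ?_, ?_⟩⟩
    · omega
    · omega
    · intro e he heN
      have := hd0 e he heN
      omega
    · simp [pS_z]
    · simp [pS_z]
    · simp [pS_z]
    · intro e he heN
      have := hd1 e
      simp [pS_z]
      omega

/-- Peeling of a simplified point. -/
lemma peelZ (N : ℕ) (w a d : ℕ → ℕ) (b i : ℕ) (hi : 1 ≤ i) (hiN : i ≤ N + 2)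
    (hK : KZ N ((w + Pi.single i 1 : ℕ → ℕ) (N + 1)) ((w + Pi.single i 1 : ℕ → ℕ) (N + 2)) (a (N + 1)) b (pS a)
      (pS (w + Pi.single i 1)) (tS N d))
    (hc : a (N + 1) = 0 ∨ b = 0 ∨ pS a N = pS (w + Pi.single i 1) N) :
    ∃ (a0 a1 : ℕ → ℕ) (b0 b1 : ℕ) (d0 d1 : ℕ → ℕ), a = a0 + a1 ∧ b = b0 + b1 ∧ d = d0 + d1 ∧
      KD N (w (N + 1)) (w (N + 2)) (a0 (N + 1)) b0 (pS a0) (pS w) (tS N d0) ∧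
      KD N ((Pi.single i 1 : ℕ → ℕ) (N + 1)) ((Pi.single i 1 : ℕ → ℕ) (N + 2))
        (a1 (N + 1)) b1 (pS a1) (pS (Pi.single i 1)) (tS N d1) := by
  rcases Nat.lt_or_ge N i with h | h
  · have hM : ∀ j, j ≤ N → pS (w + Pi.single i 1) j = pS w j := by
      intro j hj
      rw [pS_add, pS_single _ _ hi, if_neg (by omega)]
      rfl
    have hM' : ∀ j, j ≤ N → pS (Pi.single i 1) j = 0 := by
      intro j hj
      rw [pS_single _ _ hi, if_neg (by omega)]
    have hst : (Pi.single i 1 : ℕ → ℕ) (N + 1) + (Pi.single i 1 : ℕ → ℕ) (N + 2) = 1 := by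
      simp only [single_val]
      split_ifs <;> omega
    obtain ⟨h1, h2, h3, h4⟩ := hK
    obtain ⟨a0, a1, b0, b1, d0, d1, ea, eb, ed, k0, k1⟩ := tokE N a d (pS w)
      (fun e he => pS_mono w he) (w (N + 1)) (w (N + 2)) b _ _ hst (by
        rw [hM N le_rfl] at *
        refine ⟨fun j hj => ?_, h2, h3, fun e he heN => ?_⟩
        · rw [← hM j hj]; exact h1 j hj
        · rw [← hM e heN]; exact h4 e he heN)
    refine ⟨a0, a1, b0, b1, d0, d1, ea, eb, ed, k0.toKD, KZ.toKD ?_⟩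
    obtain ⟨k1, k2, k3, k4⟩ := k1
    refine ⟨fun j hj => ?_, ?_, ?_, fun e he heN => ?_⟩
    · rw [hM' j hj]; exact k1 j hj
    · rw [hM' N le_rfl]; exact k2
    · rw [hM' N le_rfl]; exact k3
    · rw [hM' N le_rfl, hM' e heN]; exact k4 e he heN
  · obtain ⟨a0, a1, b0, b1, d0, d1, rfl, rfl, rfl, q1, q2, q3, q4, q5, q6⟩ :=
      tok1 N (w + Pi.single i 1) a d b i hi h (by simp) hK hc
    have q4N := q4 N (by omega) le_rfl
    obtain ⟨d00, d2, rfl, r1, r2⟩ := tok2 N (w + Pi.single i 1) d0 i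
      (2 * pS (w + Pi.single i 1) N + (w + Pi.single i 1 : ℕ → ℕ) (N + 1)
        + (w + Pi.single i 1 : ℕ → ℕ) (N + 2)
        - 1 - (pS a0 N + a0 (N + 1) + b0)) hi h (by simp)
      (fun e he heN => by have := q4 e he heN; omega)
    refine ⟨a0, a1, b0, b1, d00, d2 + d1, rfl, rfl, by rw [add_assoc], KZ.toKD ?_, KZ.toKD ?_⟩
    · simp only [pS_add, pS_single _ _ hi, Pi.add_apply, single_val, if_pos h,
        if_neg (show ¬ N + 1 = i by omega), if_neg (show ¬ N + 2 = i by omega)] at *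
      refine ⟨?_, ?_, ?_, ?_⟩
      · intro j hj
        have := q1 j hj
        omega
      · omega
      · omega
      · intro e he heN
        have := q4 e he heN
        have := r1 e he heN
        split_ifs at * <;> omega
    · have q6N := q6 N
      have q5N := q5 N le_rfl
      simp only [if_pos h] at q5N
      simp only [KZ, pS_single _ _ hi, single_val, if_pos h, tS_add,
        if_neg (show ¬ N + 1 = i by omega), if_neg (show ¬ N + 2 = i by omega)]
      refine ⟨q5, ?_, ?_, ?_⟩
      · omega
      · omega
      · intro e he heN
        have := q6 e
        have := r2 e he
        split_ifs at * <;> omega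

/-- The last tight index. -/
lemma exists_tight (A M : ℕ → ℕ) (h0 : A 0 = M 0) (N : ℕ) (h : ∀ j, j ≤ N → A j ≤ M j)
    (hN : A N < M N) :
    ∃ i, i < N ∧ A i = M i ∧ ∀ j, i < j → j ≤ N → A j < M j := by
  induction N with
  | zero => omega
  | succ N ih =>
    by_cases hh : A N = M N
    · refine ⟨N, by omega, hh, fun j h1 h2 => ?_⟩
      obtain rfl : j = N + 1 := by omega
      exact hN
    · have := h N (by omega)
      obtain ⟨i, h1, h2, h3⟩ := ih (fun j hj => h j (by omega)) (by omega)
      refine ⟨i, by omega, h2, fun j h4 h5 => ?_⟩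
      rcases Nat.lt_or_ge N j with h' | h'
      · obtain rfl : j = N + 1 := by omega
        exact hN
      · exact h3 j h4 h'

/-- Peeling of a point of `S_D`. -/
lemma peel_s3 (N : ℕ) (m a d : ℕ → ℕ) (b : ℕ)
    (hm : ∃ i, 1 ≤ i ∧ i ≤ N + 2 ∧ 0 < m i)
    (hK : KD N (m (N + 1)) (m (N + 2)) (a (N + 1)) b (pS a) (pS m) (tS N d)) :
    ∃ (i : ℕ) (w : ℕ → ℕ), 1 ≤ i ∧ i ≤ N + 2 ∧ m = w + Pi.single i 1 ∧
    ∃ (a0 a1 : ℕ → ℕ) (b0 b1 : ℕ) (d0 d1 : ℕ → ℕ), a = a0 + a1 ∧ b = b0 + b1 ∧ d = d0 + d1 ∧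
      KD N (w (N + 1)) (w (N + 2)) (a0 (N + 1)) b0 (pS a0) (pS w) (tS N d0) ∧
      KD N ((Pi.single i 1 : ℕ → ℕ) (N + 1)) ((Pi.single i 1 : ℕ → ℕ) (N + 2))
        (a1 (N + 1)) b1 (pS a1) (pS (Pi.single i 1)) (tS N d1) := by
  obtain ⟨h1, h2, h3, h4, h5, h6⟩ := hK
  have h1N := h1 N le_rfl
  by_cases hc : a (N + 1) = 0 ∨ b = 0 ∨ pS a N = pS m N
  · obtain ⟨i, hi, hiN, hmi⟩ := hm
    obtain ⟨w, rfl⟩ := exists_sub_single_s3 m i hmi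
    refine ⟨i, w, hi, hiN, rfl, ?_⟩
    refine peelZ N w a d b i hi hiN ⟨h1, h2, h3, ?_⟩ hc
    intro e he heN
    have := h4 e he heN
    have := h5 e he heN
    have := h6 e N he heN le_rfl
    omega
  · push Not at hc
    obtain ⟨hp, hq, hA⟩ := hc
    obtain ⟨i, hiN, hti, hsl⟩ := exists_tight (pS a) (pS m) (by simp [pS_zero]) N h1 (by omega)
    have hmi : 0 < m (i + 1) := by
      have := hsl (i + 1) (by omega) (by omega)
      have := pS_succ m i
      have := pS_succ a i
      omega
    obtain ⟨w, rfl⟩ := exists_sub_single_s3 m (i + 1) hmi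
    obtain ⟨a0, rfl⟩ := exists_sub_single_s3 a (N + 1) (by omega)
    refine ⟨i + 1, w, by omega, by omega, rfl, a0, _, b - 1, 1, d, 0, rfl, by omega, by simp,
      ?_, ?_⟩
    · have key : ∀ e, 1 ≤ e → e ≤ i → _ := fun e he hei => h6 e i he hei (by omega)
      simp only [pS_add, pS_single (i + 1) _ (show 1 ≤ i + 1 by omega),
        pS_single (N + 1) _ (show 1 ≤ N + 1 by omega), Pi.add_apply,
        single_val, if_pos (show i + 1 ≤ N by omega), if_neg (show ¬ N + 1 ≤ N by omega),
        if_neg (show ¬ i + 1 ≤ i by omega), if_neg (show ¬ N + 1 ≤ i by omega),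
        if_neg (show ¬ N + 1 = i + 1 by omega), if_neg (show ¬ N + 2 = i + 1 by omega),
        if_pos] at *
      refine ⟨?_, ?_, ?_, ?_, ?_, ?_⟩
      · intro j hj
        have := h1 j hj
        have := hsl j
        split_ifs at * <;> omega
      · omega
      · omega
      · intro e he heN
        have := h4 e he heN
        have := key e he
        split_ifs at * <;> omega
      · intro e he heN
        have := h5 e he heN
        have := key e he
        split_ifs at * <;> omega
      · intro e k he hek hk
        have := h6 e k he hek hk
        have := key e he
        have := hsl k
        split_ifs at * <;> omega
    · simp only [pS_single (i + 1) _ (show 1 ≤ i + 1 by omega),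
        pS_single (N + 1) _ (show 1 ≤ N + 1 by omega), 
        single_val, if_pos (show i + 1 ≤ N by omega), if_neg (show ¬ N + 1 ≤ N by omega),
        if_neg (show ¬ N + 1 = i + 1 by omega), if_neg (show ¬ N + 2 = i + 1 by omega),
        if_pos]
      refine ⟨?_, ?_, ?_, ?_, ?_, ?_⟩
      · intro j hj
        simp only [pS_single (i + 1) _ (show 1 ≤ i + 1 by omega),
          pS_single (N + 1) _ (show 1 ≤ N + 1 by omega)]
        split_ifs <;> omega
      all_goals simp only [pS_single (i + 1) _ (show 1 ≤ i + 1 by omega), tS_z,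
          pS_single (N + 1) _ (show 1 ≤ N + 1 by omega)]
      all_goals intros
      all_goals split_ifs <;> omega

lemma SD_add_mem (N : ℕ) (hN : 2 ≤ N) (m m' : ℕ → ℕ) (x y : (ℕ → ℕ) × ℕ × (ℕ → ℕ))
    (hx : x ∈ SD (N + 2) m) (hy : y ∈ SD (N + 2) m') : x + y ∈ SD (N + 2) (m + m') := by
  obtain ⟨a, b, d⟩ := x
  obtain ⟨a', b', d'⟩ := y
  change (a + a', b + b', d + d') ∈ _
  rw [SD_iff N hN] at *
  obtain ⟨s1, s2, h1, h2, h3, h4, h5, h6⟩ := hx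
  obtain ⟨t1, t2, k1, k2, k3, k4, k5, k6⟩ := hy
  refine ⟨fun l hl => ?_, fun l hl => ?_, ?_, ?_, ?_, ?_, ?_, ?_⟩
  · simp [s1 l hl, t1 l hl]
  · simp [s2 l hl, t2 l hl]
  all_goals simp only [pS_add, tS_add, Pi.add_apply]
  · intro j hj
    have := h1 j hj
    have := k1 j hj
    omega
  · omega
  · omega
  · intro e he heN
    have := h4 e he heN
    have := k4 e he heN
    omega
  · intro e he heN
    have := h5 e he heN
    have := k5 e he heN
    omega
  · intro e k he hek hk
    have := h6 e k he hek hk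
    have := k6 e k he hek hk
    omega

lemma SD_zero_mem (N : ℕ) (hN : 2 ≤ N) (m : ℕ → ℕ) : (0, 0, 0) ∈ SD (N + 2) m := by
  rw [SD_iff N hN]
  refine ⟨by simp, by simp, KZ.toKD ⟨?_, ?_, ?_, ?_⟩⟩
  · simp [pS_z]
  · simp [pS_z]
  · simp [pS_z]
  · intro e he heN
    have := pS_mono m heN
    simp only [pS_z, tS_z, Pi.zero_apply]
    omega

lemma SD_split (N : ℕ) (hN : 2 ≤ N) (s : ℕ) : ∀ (m m' : ℕ → ℕ), pS (m + m') (N + 2) = s →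
    ∀ x ∈ SD (N + 2) (m + m'), ∃ y ∈ SD (N + 2) m, ∃ z ∈ SD (N + 2) m', y + z = x := by
  induction s with
  | zero =>
    intro m m' hs x hx
    refine ⟨(0, 0, 0), SD_zero_mem N hN m, (0, 0, 0), SD_zero_mem N hN m', ?_⟩
    obtain ⟨a, b, d⟩ := x
    rw [SD_iff N hN] at hx
    obtain ⟨s1, s2, h1, h2, h3, h4, h5, h6⟩ := hx
    have e1 : pS (m + m') (N + 2) = pS (m + m') (N + 1) + (m + m') (N + 2) :=
      pS_succ (m + m') (N + 1)
    have e2 := pS_succ (m + m') N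
    have h41 := h4 1 le_rfl (by omega)
    have ha : a = 0 := by
      funext l
      by_cases hl : l = 0 ∨ N + 1 < l
      · exact s1 l hl
      · have : a l ≤ pS a (N + 1) :=
          Finset.single_le_sum (f := a) (fun _ _ => Nat.zero_le _)
            (Finset.mem_Icc.2 ⟨by omega, by omega⟩)
        have := pS_succ a N
        change a l = 0
        omega
    have hd : d = 0 := by
      funext l
      by_cases hl : l ≤ 1 ∨ N + 1 < l
      · exact s2 l hl
      · have : d l ≤ tS N d 1 :=
          Finset.single_le_sum (f := d) (fun _ _ => Nat.zero_le _)
            (Finset.mem_Icc.2 ⟨by omega, by omega⟩)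
        change d l = 0
        omega
    have hb : b = 0 := by omega
    subst ha hb hd
    simp
  | succ s ih =>
    intro m m' hs x hx
    obtain ⟨a, b, d⟩ := x
    rw [SD_iff N hN] at hx
    obtain ⟨s1, s2, hK⟩ := hx
    have hm : ∃ i, 1 ≤ i ∧ i ≤ N + 2 ∧ 0 < (m + m') i := by
      by_contra hcon
      push Not at hcon
      have : pS (m + m') (N + 2) = 0 := by
        unfold pS
        apply Finset.sum_eq_zero
        intro l hl
        rw [Finset.mem_Icc] at hl
        have := hcon l hl.1 hl.2
        omega
      omega
    obtain ⟨i, w, hi, hiN, hw, a0, a1, b0, b1, d0, d1, rfl, rfl, rfl, k0, k1⟩ :=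
      peel_s3 N (m + m') a d b hm hK
    have m0 : (a0, b0, d0) ∈ SD (N + 2) w := by
      rw [SD_iff N hN]
      refine ⟨fun l hl => ?_, fun l hl => ?_, k0⟩
      · have := s1 l hl
        simp only [Pi.add_apply] at this
        omega
      · have := s2 l hl
        simp only [Pi.add_apply] at this
        omega
    have m1 : (a1, b1, d1) ∈ SD (N + 2) (Pi.single i 1) := by
      rw [SD_iff N hN]
      refine ⟨fun l hl => ?_, fun l hl => ?_, k1⟩
      · have := s1 l hl
        simp only [Pi.add_apply] at this
        omega
      · have := s2 l hl
        simp only [Pi.add_apply] at this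
        omega
    have hws : pS w (N + 2) = s := by
      rw [hw, pS_add, pS_single _ _ hi, if_pos hiN] at hs
      omega
    have hwi := congrFun hw i
    simp only [Pi.add_apply, Pi.single_eq_same] at hwi
    change ∃ y ∈ SD (N + 2) m, ∃ z ∈ SD (N + 2) m', y + z = (a0, b0, d0) + (a1, b1, d1)
    rcases Nat.eq_zero_or_pos (m i) with h | h
    · obtain ⟨m0', rfl⟩ := exists_sub_single_s3 m' i (by omega)
      have hw' : w = m + m0' := by
        rw [← add_assoc] at hw
        exact (add_right_cancel hw).symm
      subst hw'
      obtain ⟨y, hy, z, hz, hyz⟩ := ih _ _ hws _ m0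
      refine ⟨y, hy, z + (a1, b1, d1), SD_add_mem N hN _ _ _ _ hz m1, ?_⟩
      rw [← hyz, add_assoc]
    · obtain ⟨m0', rfl⟩ := exists_sub_single_s3 m i h
      have hw' : w = m0' + m' := by
        rw [add_right_comm] at hw
        exact (add_right_cancel hw).symm
      subst hw'
      obtain ⟨y, hy, z, hz, hyz⟩ := ih _ _ hws _ m0
      refine ⟨y + (a1, b1, d1), SD_add_mem N hN _ _ _ _ hy m1, z, hz, ?_⟩
      rw [← hyz, add_right_comm]

/-- Minkowski sum property `S_D(m + m') = S_D(m) + S_D(m')` (type `D` case of the paper's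
Lemma `S_w(λ) + S_w(μ) = S_w(λ + μ)`). -/
theorem SD_add_eq_minkowski (n : ℕ) (hn : 4 ≤ n) (m m' : ℕ → ℕ) :
    SD n (m + m') = SD n m + SD n m' := by
  obtain ⟨N, rfl⟩ : ∃ N, n = N + 2 := ⟨n - 2, by omega⟩
  ext x
  rw [Set.mem_add]
  constructor
  · intro hx
    exact SD_split N (by omega) _ m m' rfl x hx
  · rintro ⟨y, hy, z, hz, rfl⟩
    exact SD_add_mem N (by omega) m m' y z hy hz
end

section
/- For every m ∈ ℕ^n, every x ∈ S_A(m) and every index 1 ≤ i ≤ n with m_i ≥ 1, there exists y ∈ S_A(e_i), where e_i ∈ ℕ^n is the i-th standard unit vector, such that y ≤ x componentwise and x − y ∈ S_A(m − e_i). (This is the type-A case of the paper's decomposition Proposition and its Corollary: any point of S_w(λ) can be reduced by a point of S_w(ω_i) to a point of S_w(λ − ω_i).) -/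
open Finset
open scoped Pointwise

/-- The `i`-th standard unit vector (1-based coordinates, as a function `ℕ → ℕ`). -/
def unitVec (i : ℕ) : ℕ → ℕ := fun l => if l = i then 1 else 0

theorem sum_split (f : ℕ → ℕ) (k r : ℕ) (h : k ≤ r) :
    ∑ l ∈ Icc 1 r, f l = ∑ l ∈ Icc 1 k, f l + ∑ l ∈ Icc (k + 1) r, f l := by
  induction r, h using Nat.le_induction with
  | base => simp
  | succ r hr ih =>
    rw [Finset.sum_Icc_succ_top (by omega), Finset.sum_Icc_succ_top (by omega), ih, add_assoc]

theorem mem_SA_iff (n : ℕ) (m : ℕ → ℕ) (x : (ℕ → ℕ) × (ℕ → ℕ)) :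
    x ∈ SA n m ↔ (∀ l, (l = 0 ∨ n < l) → x.1 l = 0) ∧
    (∀ l, (l ≤ 1 ∨ n < l) → x.2 l = 0) ∧
    (∀ j, 1 ≤ j → j < n → ∑ l ∈ Icc 1 j, x.1 l ≤ ∑ l ∈ Icc 1 j, m l) ∧
    (∀ k, 1 ≤ k → k < n →
      ∑ l ∈ Icc (k + 1) n, x.2 l + ∑ l ∈ Icc 1 k, m l ≤ ∑ l ∈ Icc 1 n, m l) ∧
    (∀ k r, 1 ≤ k → k ≤ r → r < n →
      (∑ l ∈ Icc 1 r, x.1 l) + x.1 n + ∑ l ∈ Icc (k + 1) n, x.2 l + ∑ l ∈ Icc 1 k, m l ≤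
        (∑ l ∈ Icc 1 n, m l) + ∑ l ∈ Icc 1 r, m l) := by
  constructor
  · rintro ⟨h0, h0', h1, h2, h3, h4⟩
    refine ⟨h0, h0', h1, ?_, ?_⟩
    · intro k hk hkn
      have := h2 (k + 1) (by omega) (by omega)
      have := sum_split m k n (by omega)
      omega
    · intro k r hk hkr hr
      rcases Nat.lt_or_ge k r with h | h
      · have := h4 (k + 1) r (by omega) (by omega) (by omega) hr
        have := sum_split m k r (by omega)
        omega
      · obtain rfl : k = r := by omega
        have := h3 k hk hr
        omega
  · rintro ⟨h0, h0', h1, h2, h4⟩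
    refine ⟨h0, h0', h1, ?_, ?_, ?_⟩
    · intro k hk hkn
      obtain ⟨k, rfl⟩ : ∃ k', k = k' + 1 := ⟨k - 1, by omega⟩
      have := h2 k (by omega) (by omega)
      have := sum_split m k n (by omega)
      omega
    · intro t ht htn
      have := h4 t t ht le_rfl htn
      omega
    · intro k r hk hkn hkr hr
      obtain ⟨k, rfl⟩ : ∃ k', k = k' + 1 := ⟨k - 1, by omega⟩
      have := h4 k r (by omega) (by omega) hr
      have := sum_split m k r (by omega)
      omega

/-- The combinatorial heart, in terms of partial sums. -/
theorem core (n : ℕ) (A C M : ℕ → ℕ) (an i : ℕ) (hi1 : 1 ≤ i) (hin : i ≤ n)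
    (hMi : M (i - 1) + 1 ≤ M i) (hA0 : A 0 = 0) (hCn : C n = 0)
    (hA : ∀ j k, j ≤ k → A j ≤ A k) (hC : ∀ j k, j ≤ k → C k ≤ C j)
    (hM : ∀ j k, j ≤ k → M j ≤ M k)
    (h1 : ∀ j, 1 ≤ j → j < n → A j ≤ M j)
    (h2 : ∀ k, 1 ≤ k → k < n → C k + M k ≤ M n)
    (h4 : ∀ k r, 1 ≤ k → k ≤ r → r < n → A r + an + C k + M k ≤ M n + M r) :
    ∃ p q c, i ≤ p ∧ p ≤ n ∧ 1 ≤ q ∧ q ≤ i ∧ c ≤ 1 ∧ c ≤ an ∧ (c = 1 → p = n ∧ q = 1) ∧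
      (p < n → A (p - 1) < A p) ∧ (1 < q → C q < C (q - 1)) ∧
      (∀ j, i ≤ j → j < n → j < p → A j + 1 ≤ M j) ∧
      (∀ k, 1 ≤ k → k < i → q ≤ k → C k + M k + 1 ≤ M n) ∧
      (∀ k r, 1 ≤ k → k ≤ r → r < n →
        A r + an + C k + M k + 1 + (if i ≤ r then 1 else 0) ≤
          M n + M r + (if p ≤ r then 1 else 0) + (if k < q then 1 else 0) + c
            + (if i ≤ k then 1 else 0)) := by
  have h1' : ∀ j, j < n → A j ≤ M j := by
    intro j hj
    rcases Nat.eq_zero_or_pos j with rfl | h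
    · omega
    · exact h1 j h hj
  have h2' : ∀ k, 1 ≤ k → k ≤ n → C k + M k ≤ M n := by
    intro k hk hkn
    rcases Nat.lt_or_ge k n with h | h
    · exact h2 k hk h
    · obtain rfl : k = n := by omega
      omega
  have hAs := h1' (i - 1) (by omega)
  have hCi := h2' i hi1 hin
  by_cases hc1 : ∃ t, i ≤ t ∧ t < n ∧ A t = A (i - 1) ∧ A t + an + C t = M n
  · obtain ⟨t, hit, htn, hAt, htight⟩ := hc1
    have hCt := h2' t (by omega) (by omega)
    have hMt := hM i t hit
    refine ⟨n, 1, 1, hin, le_rfl, le_rfl, hi1, le_rfl, by omega, by simp, by simp, by simp,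
      ?_, ?_, ?_⟩
    · intro j hj hjn _
      rcases Nat.lt_or_ge j t with h | h
      · have := hA j t (by omega)
        have := hM i j hj
        omega
      · have := h4 t j (by omega) h hjn
        omega
    · intro k hk hki _
      have := h4 k t hk (by omega) htn
      have := h4 k (i - 1) hk (by omega) (by omega)
      omega
    · intro k r hk hkr hrn
      have e0 := h4 k r hk hkr hrn
      by_cases hik : i ≤ k
      · have : i ≤ r := by omega
        split_ifs <;> omega
      · by_cases hir : i ≤ r
        · have e1 := h4 k (i - 1) hk (by omega) (by omega)
          have e2 : A r + M i ≤ A (i - 1) + M r := by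
            rcases Nat.lt_or_ge r t with h | h
            · have := hA r t (by omega)
              have := hM i r hir
              omega
            · have := h4 t r (by omega) h hrn
              omega
          split_ifs <;> omega
        · split_ifs <;> omega
  by_cases hc2 : ∃ t, 1 ≤ t ∧ t < i ∧ C t = C i ∧ A t + an + C t = M n
  · obtain ⟨t, ht, hti, hCt, htight⟩ := hc2
    have hAt := h1' t (by omega)
    have hMt := hM t (i - 1) (by omega)
    refine ⟨n, 1, 1, hin, le_rfl, le_rfl, hi1, le_rfl, by omega, by simp, by simp, by simp,
      ?_, ?_, ?_⟩
    · intro j hj hjn _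
      have := h4 t j ht (by omega) hjn
      have := h4 i j (by omega) hj hjn
      omega
    · intro k hk hki _
      rcases Nat.lt_or_ge t k with h | h
      · have := hC t k (by omega)
        have := hM k (i - 1) (by omega)
        omega
      · have := h4 k t hk h (by omega)
        omega
    · intro k r hk hkr hrn
      have e0 := h4 k r hk hkr hrn
      by_cases hik : i ≤ k
      · have : i ≤ r := by omega
        split_ifs <;> omega
      · by_cases hir : i ≤ r
        · have e1 := h4 i r (by omega) hir hrn
          have e2 : C k + M k + 1 ≤ C i + M i := by
            rcases Nat.lt_or_ge t k with h | h
            · have := hC t k (by omega)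
              have := hM k (i - 1) (by omega)
              omega
            · have := h4 k t hk h (by omega)
              omega
          split_ifs <;> omega
        · split_ifs <;> omega
  push Not at hc1 hc2
  have hp : ∃ p, i ≤ p ∧ p ≤ n ∧ (p < n → A (p - 1) < A p) ∧
      ∀ j, i ≤ j → j < p → A j = A (i - 1) := by
    clear hc1 hc2 h4 h1 h2
    have : ∀ d, ∀ s, i ≤ s → s + d = n → (∀ j, i ≤ j → j < s → A j = A (i - 1)) →
      ∃ p, i ≤ p ∧ p ≤ n ∧ (p < n → A (p - 1) < A p) ∧
      ∀ j, i ≤ j → j < p → A j = A (i - 1) := by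
      intro d
      induction d with
      | zero => intro s hs hsn h; exact ⟨s, hs, by omega, by omega, h⟩
      | succ d ih =>
        intro s hs hsn h
        by_cases hlt : A (s - 1) < A s
        · exact ⟨s, hs, by omega, fun _ => hlt, h⟩
        · refine ih (s + 1) (by omega) (by omega) ?_
          intro j hj hjs
          rcases Nat.lt_or_ge j s with hh | hh
          · exact h j hj hh
          · obtain rfl : j = s := by omega
            have e := hA (j - 1) j (by omega)
            rcases Nat.eq_or_lt_of_le hj with g | g
            · subst g; omega
            · have := h (j - 1) (by omega) (by omega)
              omega
    exact this (n - i) i le_rfl (by omega) (by intro j _ _; omega)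
  have hq : ∃ q, 1 ≤ q ∧ q ≤ i ∧ (1 < q → C q < C (q - 1)) ∧
      ∀ k, q ≤ k → k ≤ i → C k = C i := by
    clear hc1 hc2 h4 h1 h2
    have : ∀ s, 1 ≤ s → s ≤ i → (∀ k, s ≤ k → k ≤ i → C k = C i) →
        ∃ q, 1 ≤ q ∧ q ≤ i ∧ (1 < q → C q < C (q - 1)) ∧
      ∀ k, q ≤ k → k ≤ i → C k = C i := by
      intro s hs
      induction s, hs using Nat.le_induction with
      | base => intro hs h; exact ⟨1, le_rfl, hs, by omega, h⟩
      | succ s hs ih =>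
        intro hsi h
        by_cases hlt : C (s + 1) < C s
        · exact ⟨s + 1, by omega, hsi, fun _ => by simpa using hlt, h⟩
        · refine ih (by omega) ?_
          intro k hk hki
          rcases Nat.lt_or_ge s k with hh | hh
          · exact h k hh hki
          · obtain rfl : k = s := by omega
            have := hC k (k + 1) (by omega)
            have := h (k + 1) (by omega) hsi
            omega
    exact this i hi1 le_rfl (by intro k _ _; congr 1; omega)
  obtain ⟨p, hip, hpn, hp1, hp2⟩ := hp
  obtain ⟨q, hq0, hqi, hq1, hq2⟩ := hq
  refine ⟨p, q, 0, hip, hpn, hq0, hqi, by omega, by omega, by simp, hp1, hq1, ?_, ?_, ?_⟩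
  · intro j hj _ hjp
    have := hp2 j hj hjp
    have := hM i j hj
    omega
  · intro k hk hki hqk
    have := hq2 k hqk (by omega)
    have := hM k (i - 1) (by omega)
    omega
  · intro k r hk hkr hrn
    have e0 := h4 k r hk hkr hrn
    -- consequences when `p` (resp. `q`) misses the range
    have P : i ≤ r → r < p → A r = A (i - 1) := fun a b => hp2 r a b
    have Q : q ≤ k → k ≤ i → C k = C i := fun a b => hq2 k a b
    by_cases hik : i ≤ k
    · have hir : i ≤ r := by omega
      by_cases hpr : p ≤ r
      · split_ifs <;> omega
      · have a1 := hp2 r hir (by omega)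
        have a2 := hp2 k hik (by omega)
        have a3 := hc1 k hik (by omega) a2
        have a4 := h4 k k hk le_rfl (by omega)
        have a5 := hM k r hkr
        split_ifs <;> omega
    · by_cases hir : i ≤ r
      · have f1 := h4 k (i - 1) hk (by omega) (by omega)
        have f2 := h4 i r (by omega) hir hrn
        have hMk := hM k (i - 1) (by omega)
        have hMr := hM i r hir
        by_cases hpr : p ≤ r
        · by_cases hqk : k < q
          · split_ifs <;> omega
          · have := hq2 k (by omega) (by omega)
            split_ifs <;> omega
        · have a1 := hp2 r hir (by omega)
          have a2 := hp2 i le_rfl (by omega)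
          by_cases hqk : k < q
          · split_ifs <;> omega
          · have := hq2 k (by omega) (by omega)
            have a3 := hc1 i le_rfl (by omega) a2
            have a4 := h4 i i hi1 le_rfl (by omega)
            split_ifs <;> omega
      · by_cases hqk : k < q
        · split_ifs <;> omega
        · have b1 := hq2 k (by omega) (by omega)
          have b2 := hq2 r (by omega) (by omega)
          have b3 := hc2 r (by omega) (by omega) b2
          have b4 := h4 r r (by omega) le_rfl (by omega)
          have b5 := hM k r hkr
          split_ifs <;> omega

/-- The reducing point, encoded by `p`, `q`, `c`. -/
def yPt (n p q c : ℕ) : (ℕ → ℕ) × (ℕ → ℕ) :=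
  (fun l => (if l = p then (if p < n then 1 else 0) else 0) + (if l = n then c else 0),
   fun l => if l = q then (if 1 < q then 1 else 0) else 0)

theorem sum_unit (i j : ℕ) (hi : 1 ≤ i) :
    ∑ l ∈ Icc 1 j, unitVec i l = if i ≤ j then 1 else 0 := by
  simp [unitVec, Finset.sum_ite_eq', hi]

theorem sum_y1 (n p q c j : ℕ) (hp : 1 ≤ p) (hj : j < n) :
    ∑ l ∈ Icc 1 j, (yPt n p q c).1 l = if p ≤ j then 1 else 0 := by
  simp only [yPt, Finset.sum_add_distrib, Finset.sum_ite_eq', Finset.mem_Icc]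
  split_ifs <;> omega

theorem sum_y2 (n p q c k : ℕ) (hq : q ≤ n) (hk : 1 ≤ k) :
    ∑ l ∈ Icc (k + 1) n, (yPt n p q c).2 l = if k < q then 1 else 0 := by
  simp only [yPt, Finset.sum_ite_eq', Finset.mem_Icc]
  split_ifs <;> omega

/-- Decomposition property in type `A`: any point of `S_A(m)` with `m_i ≥ 1` can be reduced
by a point of `S_A(e_i)` to a point of `S_A(m - e_i)`. -/
theorem SA_decomposition (n : ℕ) (hn : 2 ≤ n) (m : ℕ → ℕ) (i : ℕ) (hi1 : 1 ≤ i) (hin : i ≤ n)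
    (hmi : 1 ≤ m i) (x : (ℕ → ℕ) × (ℕ → ℕ)) (hx : x ∈ SA n m) :
    ∃ y ∈ SA n (unitVec i), y ≤ x ∧ x - y ∈ SA n (m - unitVec i) := by
  rw [mem_SA_iff] at hx
  obtain ⟨h0, h0', h1, h2, h4⟩ := hx
  have stepI : ∀ (f : ℕ → ℕ) (j : ℕ), 1 ≤ j →
      ∑ l ∈ Icc 1 j, f l = ∑ l ∈ Icc 1 (j - 1), f l + f j := by
    intro f j hj
    obtain ⟨j, rfl⟩ : ∃ k, j = k + 1 := ⟨j - 1, by omega⟩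
    rw [Finset.sum_Icc_succ_top (by omega)]; simp
  obtain ⟨p, q, c, hip, hpn, hq1, hqi, hc1, hcan, hc, hpa, hqb, g1, g2, g4⟩ :=
    core n (fun j => ∑ l ∈ Icc 1 j, x.1 l) (fun k => ∑ l ∈ Icc (k + 1) n, x.2 l)
      (fun j => ∑ l ∈ Icc 1 j, m l) (x.1 n) i hi1 hin
      (by have := stepI m i hi1
          omega)
      (by simp) (by simp)
      (fun j k h => Finset.sum_le_sum_of_subset (Finset.Icc_subset_Icc_right h))
      (fun j k h => Finset.sum_le_sum_of_subset (Finset.Icc_subset_Icc_left (by omega)))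
      (fun j k h => Finset.sum_le_sum_of_subset (Finset.Icc_subset_Icc_right h))
      h1 h2 h4
  have hpa' : p < n → 1 ≤ x.1 p := by
    intro h
    have := hpa h
    have := stepI x.1 p (by omega)
    omega
  have hqb' : 1 < q → 1 ≤ x.2 q := by
    intro h
    have e := hqb h
    have e1 := sum_split x.2 q n (by omega)
    have e2 := sum_split x.2 (q - 1) n (by omega)
    have := stepI x.2 q (by omega)
    omega
  have hyn : (yPt n p q c).1 n = c := by
    simp only [yPt]; split_ifs <;> omega
  have hle1 : ∀ l, (yPt n p q c).1 l ≤ x.1 l := by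
    intro l
    simp only [yPt]
    split_ifs <;> subst_vars <;> first | omega | (have := hpa' (by assumption); omega)
  have hle2 : ∀ l, (yPt n p q c).2 l ≤ x.2 l := by
    intro l
    simp only [yPt]
    split_ifs <;> subst_vars <;> first | omega | (have := hqb' (by assumption); omega)
  have hleM : ∀ l, unitVec i l ≤ m l := by
    intro l
    simp only [unitVec]
    split_ifs <;> subst_vars <;> omega
  refine ⟨yPt n p q c, ?_, ⟨hle1, hle2⟩, ?_⟩
  · rw [mem_SA_iff]
    refine ⟨?_, ?_, ?_, ?_, ?_⟩
    · intro l hl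
      simp only [yPt]; split_ifs <;> omega
    · intro l hl
      simp only [yPt]; split_ifs <;> omega
    · intro j hj hjn
      rw [sum_y1 _ _ _ _ _ (by omega) hjn, sum_unit _ _ hi1]
      split_ifs <;> omega
    · intro k hk hkn
      rw [sum_y2 _ _ _ _ _ (by omega) hk, sum_unit _ _ hi1, sum_unit _ _ hi1]
      split_ifs <;> omega
    · intro k r hk hkr hrn
      rw [sum_y1 _ _ _ _ _ (by omega) hrn, sum_y2 _ _ _ _ _ (by omega) hk, hyn,
        sum_unit _ _ hi1, sum_unit _ _ hi1, sum_unit _ _ hi1]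
      split_ifs <;> omega
  · have sub : ∀ (s : Finset ℕ) (f g : ℕ → ℕ), (∀ l, g l ≤ f l) →
        ∑ l ∈ s, (f - g) l + ∑ l ∈ s, g l = ∑ l ∈ s, f l := by
      intro s f g h
      rw [← Finset.sum_add_distrib]
      exact Finset.sum_congr rfl (fun l _ => by simp only [Pi.sub_apply]; have := h l; omega)
    have sM : ∀ j, ∑ l ∈ Icc 1 j, (m - unitVec i) l + (if i ≤ j then 1 else 0) =
        ∑ l ∈ Icc 1 j, m l := by
      intro j
      rw [← sum_unit i j hi1]; exact sub _ _ _ hleM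
    have sA : ∀ j, j < n → ∑ l ∈ Icc 1 j, (x - yPt n p q c).1 l + (if p ≤ j then 1 else 0) =
        ∑ l ∈ Icc 1 j, x.1 l := by
      intro j hj
      rw [← sum_y1 n p q c j (by omega) hj]; exact sub _ _ _ hle1
    have sB : ∀ k, 1 ≤ k → ∑ l ∈ Icc (k + 1) n, (x - yPt n p q c).2 l +
        (if k < q then 1 else 0) = ∑ l ∈ Icc (k + 1) n, x.2 l := by
      intro k hk
      rw [← sum_y2 n p q c k (by omega) hk]; exact sub _ _ _ hle2
    have san : (x - yPt n p q c).1 n + c = x.1 n := by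
      have : (x - yPt n p q c).1 n = x.1 n - (yPt n p q c).1 n := rfl
      omega
    have sMn := sM n
    rw [if_pos hin] at sMn
    rw [mem_SA_iff]
    refine ⟨?_, ?_, ?_, ?_, ?_⟩
    · intro l hl
      have : (x - yPt n p q c).1 l = x.1 l - (yPt n p q c).1 l := rfl
      have := h0 l hl
      omega
    · intro l hl
      have : (x - yPt n p q c).2 l = x.2 l - (yPt n p q c).2 l := rfl
      have := h0' l hl
      omega
    · intro j hj hjn
      have e1 := sM j
      have e2 := sA j hjn
      have e3 := h1 j hj hjn
      have e4 := g1 j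
      split_ifs at e1 e2 <;> omega
    · intro k hk hkn
      have e1 := sM k
      have e2 := sB k hk
      have e3 := h2 k hk hkn
      have e4 := g2 k hk
      split_ifs at e1 e2 <;> omega
    · intro k r hk hkr hrn
      have e1 := sM k
      have e2 := sB k hk
      have e3 := sM r
      have e4 := sA r hrn
      have e5 := g4 k r hk hkr hrn
      omega
end

section
/- For every m ∈ ℕ^n and every integer k ≥ 1, S_A(k·m) equals the k-fold Minkowski sum of S_A(m) with itself: every element of S_A(k·m) can be written as x_1 + ⋯ + x_k with all x_t ∈ S_A(m), and conversely every such sum lies in S_A(k·m). (This expresses the normality of the polytope P_w(λ), part (1) of the paper's Main Theorem, in type A.) -/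
open Finset
open scoped Pointwise

lemma SA_add {n : ℕ} {m m' : ℕ → ℕ} {x y : (ℕ → ℕ) × (ℕ → ℕ)}
    (hx : x ∈ SA n m) (hy : y ∈ SA n m') : x + y ∈ SA n (m + m') := by
  obtain ⟨h1, h2, h3, h4, h5, h6⟩ := hx
  obtain ⟨g1, g2, g3, g4, g5, g6⟩ := hy
  refine ⟨?_, ?_, ?_, ?_, ?_, ?_⟩ <;>
    simp only [Prod.fst_add, Prod.snd_add, Pi.add_apply, Finset.sum_add_distrib]
  · intro l hl; rw [h1 l hl, g1 l hl]
  · intro l hl; rw [h2 l hl, g2 l hl]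
  · intro j a b; have := h3 j a b; have := g3 j a b; omega
  · intro j a b; have := h4 j a b; have := g4 j a b; omega
  · intro j a b; have := h5 j a b; have := g5 j a b; omega
  · intro j r a b c d; have := h6 j r a b c d; have := g6 j r a b c d; omega

lemma SA_zero (n : ℕ) : (0 : (ℕ → ℕ) × (ℕ → ℕ)) ∈ SA n 0 := by
  refine ⟨?_, ?_, ?_, ?_, ?_, ?_⟩ <;> simp

lemma SA_sum {n : ℕ} {m : ℕ → ℕ} : ∀ (k : ℕ) (x : Fin k → (ℕ → ℕ) × (ℕ → ℕ)),
    (∀ t, x t ∈ SA n m) → ∑ t, x t ∈ SA n (k • m)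
  | 0, x, _ => by simpa using SA_zero n
  | k + 1, x, hx => by
    rw [Fin.sum_univ_castSucc, succ_nsmul]
    exact SA_add (SA_sum k _ fun t => hx _) (hx _)

/-- Rounding function: the `s`-th part of `y` when split into `k` parts. -/
def rnd (k s : ℕ) (y : ℤ) : ℤ := (y + s) / k

lemma rnd_le {k : ℕ} (hk : 1 ≤ k) (s : ℕ) {y z w : ℤ} (h : y ≤ z + k * w) :
    rnd k s y ≤ rnd k s z + w := by
  have hk' : (0 : ℤ) < k := by exact_mod_cast hk
  unfold rnd
  rw [← Int.add_mul_ediv_left _ _ hk'.ne']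
  exact Int.ediv_le_ediv hk' (by linarith)

lemma rnd_mono {k : ℕ} (hk : 1 ≤ k) (s : ℕ) {y z : ℤ} (h : y ≤ z) :
    rnd k s y ≤ rnd k s z := by
  simpa using rnd_le hk s (w := 0) (by simpa using h)

lemma rnd_zero {k s : ℕ} (hs : s < k) : rnd k s 0 = 0 := by
  unfold rnd
  exact Int.ediv_eq_zero_of_lt (by positivity) (by simpa using hs)

lemma sum_rnd_succ {k : ℕ} (hk : 1 ≤ k) (y : ℤ) :
    ∑ s ∈ range k, rnd k s (y + 1) = ∑ s ∈ range k, rnd k s y + 1 := by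
  have hk' : (k : ℤ) ≠ 0 := by positivity
  have e : ∀ s, rnd k s (y + 1) = rnd k (s + 1) y := by
    intro s; unfold rnd; congr 1; push_cast; ring
  have h1 := Finset.sum_range_succ (fun s => rnd k s y) k
  have h2 := Finset.sum_range_succ' (fun s => rnd k s y) k
  have h3 : rnd k k y = rnd k 0 y + 1 := by
    unfold rnd
    rw [Int.add_ediv_of_dvd_right (dvd_refl _), Int.ediv_self hk']
    simp
  simp only [e]
  linarith

lemma sum_rnd {k : ℕ} (hk : 1 ≤ k) (y : ℤ) : ∑ s ∈ range k, rnd k s y = y := by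
  induction y using Int.induction_on with
  | zero => exact Finset.sum_eq_zero fun s hs => rnd_zero (by simpa using hs)
  | succ i ih => rw [sum_rnd_succ hk, ih]
  | pred i ih =>
    have := sum_rnd_succ hk (-(i : ℤ) - 1)
    rw [sub_add_cancel, ih] at this
    linarith

/-- Shifted partial sums of the first tuple. -/
def PA (n : ℕ) (a : ℕ → ℕ) (l : ℕ) : ℤ := ((∑ i ∈ Icc 1 l, a i) + a n : ℕ)

/-- Negated tail sums of the second tuple. -/
def QB (n : ℕ) (b : ℕ → ℕ) (l : ℕ) : ℤ := -((∑ i ∈ Icc l n, b i : ℕ) : ℤ)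

/-- The `s`-th summand in the decomposition of `z`. -/
def part (n k : ℕ) (z : (ℕ → ℕ) × (ℕ → ℕ)) (s : ℕ) : (ℕ → ℕ) × (ℕ → ℕ) :=
  (fun l => if 1 ≤ l ∧ l < n then (rnd k s (PA n z.1 l) - rnd k s (PA n z.1 (l - 1))).toNat
      else if l = n then (rnd k s (PA n z.1 0)).toNat else 0,
   fun l => if 2 ≤ l ∧ l ≤ n then (rnd k s (QB n z.2 (l + 1)) - rnd k s (QB n z.2 l)).toNat
      else 0)

lemma PA_succ (n : ℕ) (a : ℕ → ℕ) (l : ℕ) : PA n a (l + 1) = PA n a l + a (l + 1) := by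
  unfold PA
  rw [Finset.sum_Icc_succ_top (by omega)]
  push_cast; ring

lemma QB_succ (n : ℕ) (b : ℕ → ℕ) (l : ℕ) (h : l ≤ n) :
    QB n b (l + 1) = QB n b l + b l := by
  unfold QB
  rw [← Finset.add_sum_Ioc_eq_sum_Icc h]
  have : Ioc l n = Icc (l + 1) n := by ext; simp
  rw [this]
  push_cast; ring

lemma part_fst {n k : ℕ} (hk : 1 ≤ k) (z : (ℕ → ℕ) × (ℕ → ℕ)) (s l : ℕ) (h : l + 1 < n) :
    (((part n k z s).1 (l + 1) : ℕ) : ℤ) =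
      rnd k s (PA n z.1 (l + 1)) - rnd k s (PA n z.1 l) := by
  have : rnd k s (PA n z.1 l) ≤ rnd k s (PA n z.1 (l + 1)) :=
    rnd_mono hk s (by rw [PA_succ]; simp)
  simp only [part]
  rw [if_pos ⟨by omega, h⟩, Nat.add_sub_cancel]
  omega

lemma part_fst_n {n k : ℕ} (hk : 1 ≤ k) (z : (ℕ → ℕ) × (ℕ → ℕ)) (s : ℕ) (hs : s < k)
    (hn : 2 ≤ n) : (((part n k z s).1 n : ℕ) : ℤ) = rnd k s (PA n z.1 0) := by
  have := rnd_mono hk s (y := 0) (z := PA n z.1 0) (by unfold PA; positivity)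
  rw [rnd_zero hs] at this
  simp only [part]
  rw [if_neg (by omega), if_pos True.intro]
  omega

lemma part_snd {n k : ℕ} (hk : 1 ≤ k) (z : (ℕ → ℕ) × (ℕ → ℕ)) (s l : ℕ) (h2 : 2 ≤ l)
    (h : l ≤ n) : (((part n k z s).2 l : ℕ) : ℤ) =
      rnd k s (QB n z.2 (l + 1)) - rnd k s (QB n z.2 l) := by
  have : rnd k s (QB n z.2 l) ≤ rnd k s (QB n z.2 (l + 1)) :=
    rnd_mono hk s (by rw [QB_succ _ _ _ h]; simp)
  simp only [part]
  rw [if_pos ⟨h2, h⟩]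
  omega

lemma sum_part_fst {n k : ℕ} (hk : 1 ≤ k) (z : (ℕ → ℕ) × (ℕ → ℕ)) (s : ℕ) :
    ∀ l, l < n → ((∑ i ∈ Icc 1 l, (part n k z s).1 i : ℕ) : ℤ) =
      rnd k s (PA n z.1 l) - rnd k s (PA n z.1 0)
  | 0, _ => by simp
  | l + 1, h => by
    rw [Finset.sum_Icc_succ_top (by omega), Nat.cast_add,
      sum_part_fst hk z s l (by omega), part_fst hk z s l h]
    ring

lemma sum_part_snd {n k : ℕ} (hk : 1 ≤ k) (z : (ℕ → ℕ) × (ℕ → ℕ)) (s : ℕ) (hs : s < k)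
    (l : ℕ) (h2 : 2 ≤ l) (h : l ≤ n + 1) :
    ((∑ i ∈ Icc l n, (part n k z s).2 i : ℕ) : ℤ) = - rnd k s (QB n z.2 l) := by
  induction h using Nat.decreasingInduction with
  | self => simp [QB, rnd_zero hs]
  | of_succ l hl ih =>
    have e : Ioc l n = Icc (l + 1) n := by ext; simp
    rw [← Finset.add_sum_Ioc_eq_sum_Icc (by omega), e, Nat.cast_add, ih (by omega),
      part_snd hk z s l h2 (by omega)]
    ring

lemma part_mem {n k : ℕ} (hn : 2 ≤ n) (hk : 1 ≤ k) {m : ℕ → ℕ} {z : (ℕ → ℕ) × (ℕ → ℕ)}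
    (hz : z ∈ SA n (k • m)) (s : ℕ) (hs : s < k) : part n k z s ∈ SA n m := by
  obtain ⟨-, -, h3, h4, h5, h6⟩ := hz
  simp only [Pi.smul_apply, smul_eq_mul, ← Finset.mul_sum] at h3 h4 h5 h6
  have P0 : PA n z.1 0 = z.1 n := by simp [PA]
  refine ⟨?_, ?_, ?_, ?_, ?_, ?_⟩
  · intro l hl
    simp only [part]
    rw [if_neg (by omega), if_neg (by omega)]
  · intro l hl
    simp only [part]
    rw [if_neg (by omega)]
  · intro j h1 hj
    have a := h3 j h1 hj
    zify at a
    have := rnd_le hk s (y := PA n z.1 j) (z := PA n z.1 0) (w := ((∑ l ∈ Icc 1 j, m l : ℕ) : ℤ))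
      (by rw [P0]; unfold PA; push_cast; linarith)
    have := sum_part_fst hk z s j hj
    omega
  · intro i h2 hi
    have a := h4 i h2 hi
    zify at a
    have := rnd_le hk s (y := 0) (z := QB n z.2 i) (w := ((∑ l ∈ Icc i n, m l : ℕ) : ℤ))
      (by unfold QB; push_cast; linarith)
    rw [rnd_zero hs] at this
    have := sum_part_snd (n := n) hk z s hs i h2 (by omega)
    omega
  · intro t h1 ht
    have a := h5 t h1 ht
    zify at a
    have := rnd_le hk s (y := PA n z.1 t) (z := QB n z.2 (t + 1))
      (w := ((∑ l ∈ Icc 1 n, m l : ℕ) : ℤ))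
      (by unfold QB PA; push_cast; linarith)
    have := sum_part_snd (n := n) hk z s hs (t + 1) (by omega) (by omega)
    have := sum_part_fst hk z s t ht
    have := part_fst_n hk z s hs hn
    omega
  · intro i r h2 hi hir hr
    have a := h6 i r h2 hi hir hr
    zify at a
    have := rnd_le hk s (y := PA n z.1 r) (z := QB n z.2 i)
      (w := ((∑ l ∈ Icc 1 n, m l + ∑ l ∈ Icc i r, m l : ℕ) : ℤ))
      (by unfold QB PA; push_cast; linarith)
    have := sum_part_snd (n := n) hk z s hs i (by omega) (by omega)
    have := sum_part_fst hk z s r hr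
    have := part_fst_n hk z s hs hn
    omega

lemma sum_part {n k : ℕ} (hn : 2 ≤ n) (hk : 1 ≤ k) {m : ℕ → ℕ} {z : (ℕ → ℕ) × (ℕ → ℕ)}
    (hz : z ∈ SA n m) : z = ∑ s ∈ range k, part n k z s := by
  obtain ⟨h1, h2, -⟩ := hz
  refine Prod.ext ?_ ?_
  · funext l
    rw [Prod.fst_sum, Finset.sum_apply]
    by_cases hl : l = 0 ∨ n < l
    · rw [h1 l hl, Finset.sum_eq_zero]
      intro s _
      simp only [part]
      rw [if_neg (by omega), if_neg (by omega)]
    · zify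
      by_cases hln : l = n
      · subst hln
        rw [Finset.sum_congr rfl fun s hs => part_fst_n hk z s (by simpa using hs) hn,
          sum_rnd hk]
        simp [PA]
      · obtain ⟨j, rfl⟩ : ∃ j, l = j + 1 := ⟨l - 1, by omega⟩
        rw [Finset.sum_congr rfl fun s _ => part_fst hk z s j (by omega),
          Finset.sum_sub_distrib, sum_rnd hk, sum_rnd hk, PA_succ]
        ring
  · funext l
    rw [Prod.snd_sum, Finset.sum_apply]
    by_cases hl : l ≤ 1 ∨ n < l
    · rw [h2 l hl, Finset.sum_eq_zero]
      intro s _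
      simp only [part]
      rw [if_neg (by omega)]
    · zify
      rw [Finset.sum_congr rfl fun s _ => part_snd hk z s l (by omega) (by omega),
          Finset.sum_sub_distrib, sum_rnd hk, sum_rnd hk, QB_succ _ _ _ (by omega)]
      ring

/-- Normality of the polytope in type `A`: `S_A(k·m)` is the `k`-fold Minkowski sum of
`S_A(m)` with itself. -/
theorem SA_normal (n k : ℕ) (hn : 2 ≤ n) (hk : 1 ≤ k) (m : ℕ → ℕ)
    (z : (ℕ → ℕ) × (ℕ → ℕ)) :
    z ∈ SA n (k • m) ↔
      ∃ x : Fin k → (ℕ → ℕ) × (ℕ → ℕ), (∀ t, x t ∈ SA n m) ∧ z = ∑ t, x t := by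
  constructor
  · intro hz
    refine ⟨fun t => part n k z t, fun t => part_mem hn hk hz t t.2, ?_⟩
    rw [Fin.sum_univ_eq_sum_range (fun s => part n k z s) k]
    exact sum_part hn hk hz
  · rintro ⟨x, hx, rfl⟩
    exact SA_sum k x hx
end
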